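/- arXiv:2109.11378 — 3 statements merged into one kernel-verified Lean document; each statement's English description precedes it below -/
import Mathlib

section
/- Let λ be a partition and let r, c be nonnegative integers. The super (hook) Schur function s_λ[X_r − Y_c] in r positive variables x_1,…,x_r and c negative variables y_1,…,y_c, defined by s_λ[X_r − Y_c] = Σ_{μ ⊆ λ} s_μ(x_1,…,x_r)·s_{(λ/μ)'}(y_1,…,y_c), is nonzero if and only if the point (c,r) does not belong to the Young diagram [λ], i.e. if and only if λ_{r+1} ≤ c (so that [λ] fits in the fat-hook region consisting of the points with second coordinate < r or first coordinate < c). -/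
open MvPolynomial Finset

/-- Semistandardness of a filling of an arbitrary finite set of cells `s ⊆ ℕ × ℕ`
(cells are `(row, column)` pairs): entries weakly increase along rows and strictly
increase down columns (for adjacent cells that both lie in `s`). -/
def IsSemistandardOn (s : Finset (ℕ × ℕ)) {N : ℕ} (T : s → Fin N) : Prop :=
  (∀ (i j : ℕ) (h1 : (i, j) ∈ s) (h2 : (i, j + 1) ∈ s),
      T ⟨(i, j), h1⟩ ≤ T ⟨(i, j + 1), h2⟩) ∧
  (∀ (i j : ℕ) (h1 : (i, j) ∈ s) (h2 : (i + 1, j) ∈ s),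
      T ⟨(i, j), h1⟩ < T ⟨(i + 1, j), h2⟩)

open scoped Classical in
/-- The generating polynomial, in `N` variables, of semistandard fillings of the cell
set `s` with entries in `{0, …, N-1}`. -/
noncomputable def cellSchur (N : ℕ) (s : Finset (ℕ × ℕ)) : MvPolynomial (Fin N) ℤ :=
  ∑ T ∈ Finset.univ.filter (fun T : s → Fin N => IsSemistandardOn s T),
    ∏ c : s, X (T c)

/-- The Schur polynomial `s_μ(x_1, …, x_N)`: the generating function of semistandard
Young tableaux of shape `μ` with entries in `{0, …, N-1}`. -/
noncomputable def schurPoly (N : ℕ) (μ : YoungDiagram) : MvPolynomial (Fin N) ℤ :=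
  cellSchur N μ.cells

/-- `(c, r)` (column `c`, row `r`, 0-indexed) is an outer corner of `μ`: it is not a
cell of `μ`, and adding it to `μ` again yields a Young diagram. -/
def IsOuterCorner (μ : YoungDiagram) (c r : ℕ) : Prop :=
  (r, c) ∉ μ ∧ ∃ ν : YoungDiagram, ν.cells = insert (r, c) μ.cells

open scoped Classical in
/-- The super (hook) Schur polynomial `s_λ[X_r − Y_c]` in `r` positive variables
(`Sum.inl`) and `c` negative variables (`Sum.inr`), defined by
`s_λ[X_r − Y_c] = Σ_{μ ⊆ λ} s_μ(x_1,…,x_r) · s_{(λ/μ)'}(y_1,…,y_c)`: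
the sum runs over all subdiagrams `μ ⊆ λ` (lower subsets of the cells of `λ`),
and `(λ/μ)'` is the conjugate of the skew shape `λ/μ`, obtained by transposing
(swapping the coordinates of) the cells of `λ/μ`. -/
noncomputable def superSchur (r c : ℕ) (lam : YoungDiagram) :
    MvPolynomial (Fin r ⊕ Fin c) ℤ :=
  ∑ s ∈ lam.cells.powerset.filter (fun s : Finset (ℕ × ℕ) => IsLowerSet (s : Set (ℕ × ℕ))),
    rename Sum.inl (cellSchur r s) *
      rename Sum.inr (cellSchur c ((lam.cells \ s).image Prod.swap))

/-!
All coefficients are nonnegative, so evaluating at `1` shows that `s_λ[X_r − Y_c]` is nonzero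
as soon as a single summand is. If `(c, r) ∉ [λ]`, the summand of the first `r` rows `μ` of `λ`
works: filling every cell of `μ` with its row index uses only `r` values, and `λ/μ` lies in the
first `c` columns, so filling every cell of `(λ/μ)'` with its row index uses only `c` values.
Conversely, a nonzero summand forces `μ` to have at most `r` rows, so row `r` of `λ` lies in `λ/μ`
and becomes a column of `(λ/μ)'`, along which the `c` values strictly increase; hence that row
has at most `c` cells.
-/

section CellSchur

variable {N : ℕ} {s : Finset (ℕ × ℕ)}

theorem IsSemistandardOn.add_le_apply {T : s → Fin N} (hT : IsSemistandardOn s T) {i j : ℕ} :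
    ∀ {n : ℕ} (h : ∀ k ≤ n, (i + k, j) ∈ s),
      (T ⟨(i, j), h 0 n.zero_le⟩ : ℕ) + n ≤ T ⟨(i + n, j), h n le_rfl⟩
  | 0, _ => le_rfl
  | n + 1, h =>
    (hT.add_le_apply fun k hk => h k (hk.trans n.le_succ)).trans_lt
      (hT.2 (i + n) j (h n n.le_succ) (h (n + 1) le_rfl))

theorem isSemistandardOn_row (h : ∀ p ∈ s, p.1 < N) :
    IsSemistandardOn s fun p => (⟨p.1.1, h p.1 p.2⟩ : Fin N) :=
  ⟨fun _ _ _ _ => le_rfl, fun i _ _ _ => i.lt_succ_self⟩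

open scoped Classical in
theorem eval_one_cellSchur (N : ℕ) (s : Finset (ℕ × ℕ)) :
    eval 1 (cellSchur N s) = #{T : s → Fin N | IsSemistandardOn s T} := by
  simp [cellSchur]

theorem cellSchur_ne_zero_iff_exists :
    cellSchur N s ≠ 0 ↔ ∃ T : s → Fin N, IsSemistandardOn s T := by
  classical
  constructor
  · intro h
    obtain ⟨T, hT, -⟩ := exists_ne_zero_of_sum_ne_zero h
    exact ⟨T, (mem_filter.1 hT).2⟩
  · rintro ⟨T, hT⟩ h
    have hcard := eval_one_cellSchur N s
    rw [h, map_zero, eq_comm, Nat.cast_eq_zero, card_eq_zero] at hcard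
    exact filter_eq_empty_iff.1 hcard (mem_univ T) hT

theorem eval_one_cellSchur_nonneg (N : ℕ) (s : Finset (ℕ × ℕ)) :
    0 ≤ eval 1 (cellSchur N s) := by
  classical
  rw [eval_one_cellSchur]
  positivity

theorem eval_one_cellSchur_pos (h : cellSchur N s ≠ 0) : 0 < eval 1 (cellSchur N s) := by
  classical
  obtain ⟨T, hT⟩ := cellSchur_ne_zero_iff_exists.1 h
  rw [eval_one_cellSchur, Nat.cast_pos, card_pos]
  exact ⟨T, mem_filter.2 ⟨mem_univ T, hT⟩⟩

theorem cellSchur_ne_zero_of_forall_row_lt (h : ∀ p ∈ s, p.1 < N) : cellSchur N s ≠ 0 :=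
  cellSchur_ne_zero_iff_exists.2 ⟨_, isSemistandardOn_row h⟩

theorem cellSchur_eq_zero_of_column_subset {i j : ℕ} (h : ∀ k ≤ N, (i + k, j) ∈ s) :
    cellSchur N s = 0 := by
  by_contra hne
  obtain ⟨T, hT⟩ := cellSchur_ne_zero_iff_exists.1 hne
  have hle : N ≤ T ⟨(i + N, j), h N le_rfl⟩ := le_add_self.trans (hT.add_le_apply h)
  exact hle.not_gt (Fin.is_lt _)

theorem cellSchur_ne_zero_iff_of_isLowerSet (hs : IsLowerSet (s : Set (ℕ × ℕ))) :
    cellSchur N s ≠ 0 ↔ (N, 0) ∉ s := by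
  constructor
  · intro hne hmem
    refine hne (cellSchur_eq_zero_of_column_subset (i := 0) (j := 0) fun k hk => hs ?_ hmem)
    exact ⟨by simpa using hk, le_rfl⟩
  · intro hmem
    refine cellSchur_ne_zero_of_forall_row_lt fun p hp => ?_
    by_contra! hN
    exact hmem (hs (show (N, 0) ≤ p from ⟨hN, p.2.zero_le⟩) hp)

end CellSchur

section SuperSchur

variable {lam : YoungDiagram} {r c : ℕ} {s : Finset (ℕ × ℕ)}

open scoped Classical in
theorem eval_one_superSchur (r c : ℕ) (lam : YoungDiagram) :
    eval 1 (superSchur r c lam) =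
      ∑ s ∈ lam.cells.powerset.filter fun s : Finset (ℕ × ℕ) => IsLowerSet (s : Set (ℕ × ℕ)),
        eval 1 (cellSchur r s) * eval 1 (cellSchur c ((lam.cells \ s).image Prod.swap)) := by
  simp only [superSchur, map_sum, map_mul, eval_rename, Pi.one_comp]

theorem superSchur_ne_zero_iff_exists :
    superSchur r c lam ≠ 0 ↔ ∃ s ⊆ lam.cells, IsLowerSet (s : Set (ℕ × ℕ)) ∧
      cellSchur r s ≠ 0 ∧ cellSchur c ((lam.cells \ s).image Prod.swap) ≠ 0 := by
  classical
  constructor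
  · intro h
    obtain ⟨s, hs, hne⟩ := exists_ne_zero_of_sum_ne_zero h
    rw [mem_filter, mem_powerset] at hs
    exact ⟨s, hs.1, hs.2, ne_zero_of_map (left_ne_zero_of_mul hne),
      ne_zero_of_map (right_ne_zero_of_mul hne)⟩
  · rintro ⟨s, hsub, hlow, hx, hy⟩
    suffices 0 < eval 1 (superSchur r c lam) from ne_zero_of_map this.ne'
    rw [eval_one_superSchur]
    refine sum_pos' (fun t _ => ?_) ⟨s, mem_filter.2 ⟨mem_powerset.2 hsub, hlow⟩, ?_⟩
    · exact mul_nonneg (eval_one_cellSchur_nonneg _ _) (eval_one_cellSchur_nonneg _ _)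
    · exact mul_pos (eval_one_cellSchur_pos hx) (eval_one_cellSchur_pos hy)

theorem isLowerSet_filter_row_lt (lam : YoungDiagram) (r : ℕ) :
    IsLowerSet (({p ∈ lam.cells | p.1 < r} : Finset (ℕ × ℕ)) : Set (ℕ × ℕ)) := by
  intro p q hqp hp
  rw [mem_coe, mem_filter] at hp ⊢
  exact ⟨lam.isLowerSet hqp hp.1, hqp.1.trans_lt hp.2⟩

theorem cellSchur_swap_sdiff_filter_row_lt_ne_zero (h : (r, c) ∉ lam) :
    cellSchur c ((lam.cells \ {p ∈ lam.cells | p.1 < r}).image Prod.swap) ≠ 0 := by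
  refine cellSchur_ne_zero_of_forall_row_lt (forall_mem_image.2 fun p hp => ?_)
  rw [mem_sdiff, mem_filter, not_and, not_lt] at hp
  by_contra! hc
  exact h (lam.up_left_mem (hp.2 hp.1) hc hp.1)

theorem cellSchur_swap_sdiff_eq_zero (hs : IsLowerSet (s : Set (ℕ × ℕ))) (hr : (r, 0) ∉ s)
    (h : (r, c) ∈ lam) : cellSchur c ((lam.cells \ s).image Prod.swap) = 0 := by
  refine cellSchur_eq_zero_of_column_subset (i := 0) (j := r) fun k hk => ?_
  have hlam : (r, k) ∈ lam.cells := lam.up_left_mem le_rfl hk h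
  have hrs : (r, k) ∉ s := by
    have hle : (r, 0) ≤ (r, k) := ⟨le_rfl, k.zero_le⟩
    exact fun hmem => hr (hs hle hmem)
  exact mem_image.2 ⟨(r, k), mem_sdiff.2 ⟨hlam, hrs⟩, by simp⟩

theorem superSchur_ne_zero_iff_notMem : superSchur r c lam ≠ 0 ↔ (r, c) ∉ lam := by
  rw [superSchur_ne_zero_iff_exists]
  constructor
  · rintro ⟨s, -, hlow, hx, hy⟩ hmem
    have hr : (r, 0) ∉ s := (cellSchur_ne_zero_iff_of_isLowerSet hlow).1 hx
    exact hy (cellSchur_swap_sdiff_eq_zero hlow hr hmem)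
  · intro hmem
    exact ⟨{p ∈ lam.cells | p.1 < r}, filter_subset _ _, isLowerSet_filter_row_lt lam r,
      (cellSchur_ne_zero_iff_of_isLowerSet (isLowerSet_filter_row_lt lam r)).2 (by simp),
      cellSchur_swap_sdiff_filter_row_lt_ne_zero hmem⟩

end SuperSchur

/-- The super Schur function `s_λ[X_r − Y_c]` is nonzero if and only if the point
`(c, r)` (column `c`, row `r`) does not belong to the Young diagram of `λ`,
i.e. if and only if `λ_{r+1} ≤ c`. -/
theorem superSchur_ne_zero_iff (lam : YoungDiagram) (r c : ℕ) :
    superSchur r c lam ≠ 0 ↔ ((r, c) ∉ lam ∧ lam.rowLen r ≤ c) := by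
  rw [superSchur_ne_zero_iff_notMem]
  refine (and_iff_left_of_imp fun hmem => ?_).symm
  rwa [YoungDiagram.mem_iff_lt_rowLen, not_lt] at hmem
end

section
/- Let n ≥ 1 and let λ, μ⁰, μ¹, …, μ^{n−1} be partitions. If the multi-Littlewood–Richardson coefficient c^λ_{μ⁰,μ¹,…,μ^{n−1}} (the coefficient of the Schur function s_λ in the product s_{μ⁰}·s_{μ¹}⋯s_{μ^{n−1}}) is nonzero, then the Young diagram [λ] is contained in the complement region ⟨Σ_k OC(μ^k)⟩^c; equivalently, for every choice of outer corners (c_k, r_k) ∈ OC(μ^k) for k = 0,…,n−1, the point (c_0+⋯+c_{n−1}, r_0+⋯+r_{n−1}) does not belong to [λ], i.e. λ_{r_0+⋯+r_{n−1}+1} ≤ c_0+⋯+c_{n−1}. -/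
open MvPolynomial Finset

/-!
The alternants `a_{p + ρ}` of the partitions `p` not containing the cell in row `R` and column `C`
span a subgroup `hookSpan N R C` of the polynomials. By Pieri's rules for alternants,
multiplication by a complete homogeneous symmetric polynomial moves the forbidden cell `(R, C)`
down by one row, and multiplication by an elementary symmetric polynomial moves it right by one
column. If `(r, c) ∉ μ`, then the Schur polynomial `s_μ` is an integer combination of products of
`r` complete homogeneous and `c` elementary symmetric polynomials, so that multiplication by `s_μ`
moves the forbidden cell by `(r, c)`. Hence `∏ s_{μ^k} * a_ρ` is a combination of alternants of
partitions not containing the cell `(∑ r_k, ∑ c_k)`. On the other hand, the bialternant formula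
`s_λ * a_ρ = a_{λ + ρ}`, which holds because tableaux and determinants obey the same branching rule,
identifies the multi-Littlewood–Richardson coefficient with the coefficient of `a_{λ + ρ}` in it,
and alternants of distinct partitions are linearly independent.
-/

section Alternant

variable {σ : Type*} [Fintype σ] [DecidableEq σ] (R : Type*) [CommRing R]

/-- The alternant `a_l = det (x_i ^ l_j)`, the numerator (and, at the staircase, the denominator)
of the bialternant formula for Schur polynomials. -/
noncomputable def alternant (l : σ → ℕ) : MvPolynomial σ R :=
  (Matrix.of fun j i => X i ^ l j).det

/-- The antisymmetrization `f ↦ ∑ g, sign g • g f` over all permutations of the variables, without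
the factor `1 / |σ|!`. It is linear over the symmetric polynomials and sends monomials to
alternants. -/
noncomputable def antisymmetrize : MvPolynomial σ R →ₗ[R] MvPolynomial σ R :=
  ∑ g : Equiv.Perm σ, (Equiv.Perm.sign g : ℤ) • (rename g).toLinearMap

variable {R}

lemma antisymmetrize_apply (f : MvPolynomial σ R) :
    antisymmetrize R f = ∑ g : Equiv.Perm σ, (Equiv.Perm.sign g : ℤ) • rename g f := by
  simp [antisymmetrize, LinearMap.sum_apply]

lemma mul_antisymmetrize {f : MvPolynomial σ R} (hf : f.IsSymmetric) (g : MvPolynomial σ R) :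
    f * antisymmetrize R g = antisymmetrize R (f * g) := by
  simp only [antisymmetrize_apply, mul_sum, mul_smul_comm, map_mul, hf _]

lemma alternant_eq_antisymmetrize (l : σ → ℕ) :
    alternant R l = antisymmetrize R (∏ i, X i ^ l i) := by
  rw [alternant, ← Matrix.det_transpose, Matrix.det_apply, antisymmetrize_apply]
  simp [Units.smul_def]

lemma alternant_eq_sum_monomial (l : σ → ℕ) :
    alternant R l = ∑ g : Equiv.Perm σ,
      (Equiv.Perm.sign g : ℤ) • monomial (Finsupp.equivFunOnFinite.symm (l ∘ g)) 1 := by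
  simp [alternant, Matrix.det_apply, monomial_eq, Finsupp.prod_fintype, Units.smul_def]

lemma alternant_eq_zero {l : σ → ℕ} (hl : ¬ Function.Injective l) : alternant R l = 0 := by
  obtain ⟨i, j, hij, hne⟩ := Function.not_injective_iff.1 hl
  exact Matrix.det_zero_of_row_eq hne (by ext; simp [hij])

lemma isHomogeneous_alternant (l : σ → ℕ) : (alternant R l).IsHomogeneous (∑ i, l i) := by
  rw [alternant_eq_sum_monomial]
  refine IsHomogeneous.sum _ _ _ fun g _ => ?_
  rw [← mem_homogeneousSubmodule]
  refine zsmul_mem (isHomogeneous_monomial _ ?_) _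
  simpa [Finsupp.degree_eq_sum] using Equiv.sum_comp g l

lemma homogeneousComponent_sum_alternant (s : Finset (σ → ℕ)) (d : ℕ) :
    homogeneousComponent d (∑ l ∈ s, alternant R l) = ∑ l ∈ s with ∑ i, l i = d, alternant R l := by
  rw [map_sum, sum_filter]
  refine sum_congr rfl fun l _ => ?_
  simp [homogeneousComponent_of_mem (isHomogeneous_alternant l), eq_comm]

/-- The `0`-`1` vector of a set `S` of variables, the exponent of the monomial `∏ i ∈ S, X i`. -/
def indicatorVector (S : Finset σ) (i : σ) : ℕ := if i ∈ S then 1 else 0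

lemma esymm_mul_alternant (k : ℕ) (l : σ → ℕ) :
    esymm σ R k * alternant R l =
      ∑ S ∈ powersetCard k univ, alternant R (l + indicatorVector S) := by
  simp only [alternant_eq_antisymmetrize]
  rw [mul_antisymmetrize (esymm_isSymmetric σ R k), esymm, sum_mul, map_sum]
  refine sum_congr rfl fun S _ => congrArg _ ?_
  simp only [Pi.add_apply, indicatorVector, pow_add, pow_ite, pow_one,
    pow_zero, prod_mul_distrib, prod_ite_mem, univ_inter, mul_comm]

lemma hsymm_eq_sum_piAntidiag (k : ℕ) :
    hsymm σ R k = ∑ b ∈ piAntidiag univ k, ∏ i, X i ^ b i := by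
  rw [hsymm, ← map_sym_eq_piAntidiag, sum_map, sym_univ]
  exact sum_congr rfl fun m _ => by
    rw [prod_multiset_map_count]
    exact prod_subset (subset_univ _) fun i _ hi => by simp_all

lemma hsymm_mul_alternant (k : ℕ) (l : σ → ℕ) :
    hsymm σ R k * alternant R l = ∑ b ∈ piAntidiag univ k, alternant R (l + b) := by
  simp only [alternant_eq_antisymmetrize]
  rw [mul_antisymmetrize (hsymm_isSymmetric σ R k), hsymm_eq_sum_piAntidiag, sum_mul, map_sum]
  refine sum_congr rfl fun b _ => congrArg _ ?_
  simp [pow_add, prod_mul_distrib, mul_comm]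

lemma det_sum_rows {A ι : Type*} [CommRing A] (s : σ → Finset ι) (f : σ → ι → σ → A) :
    (Matrix.of fun j i => ∑ m ∈ s j, f j m i).det =
      ∑ m ∈ Fintype.piFinset s, (Matrix.of fun j i => f j (m j) i).det := by
  have sum_rows : (Matrix.of fun j i => ∑ m ∈ s j, f j m i) = fun j => ∑ m ∈ s j, f j m := by
    ext; simp
  rw [sum_rows]
  exact (Matrix.detRowAlternating (n := σ) (R := A)).toMultilinearMap.map_sum_finset f s

lemma sum_piFinset_alternant (s : σ → Finset ℕ) :
    ∑ l ∈ Fintype.piFinset s, alternant R l =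
      (Matrix.of fun j i => ∑ m ∈ s j, (X i : MvPolynomial σ R) ^ m).det :=
  (det_sum_rows s fun _ m i => X i ^ m).symm

end Alternant

section AlternantOrder

variable {σ R : Type*} [Fintype σ] [LinearOrder σ] [CommRing R]

lemma coeff_alternant {l m : σ → ℕ} (hl : StrictAnti l) (hm : StrictAnti m) :
    coeff (Finsupp.equivFunOnFinite.symm m) (alternant R l) = if l = m then 1 else 0 := by
  have eq_one_of_comp_eq {g : Equiv.Perm σ} (hg : l ∘ g = m) : g = 1 := by
    have hmono : StrictMono g := fun i j hij => hl.lt_iff_gt.1 (by simpa [← hg] using hm hij)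
    exact DFunLike.coe_injective ((hmono.range_inj strictMono_id).1 (by simp))
  rw [alternant_eq_sum_monomial, coeff_sum, sum_eq_single_of_mem 1 (mem_univ _)]
  · simp [coeff_monomial]
  · intro g _ hg
    rw [coeff_smul, coeff_monomial, if_neg, smul_zero]
    exact Finsupp.equivFunOnFinite.symm.injective.ne (mt eq_one_of_comp_eq hg)

lemma alternant_ne_zero [Nontrivial R] {l : σ → ℕ} (hl : StrictAnti l) : alternant R l ≠ 0 := by
  intro h
  simpa [h] using coeff_alternant (R := R) hl hl

end AlternantOrder

section Pieri

variable {N : ℕ} {R : Type*} [CommRing R]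

lemma piFinset_Ico_filter_lt {K : ℕ} {l : Fin (K + 1) → ℕ} (hl : Antitone l) {M : ℕ}
    (hM : l 0 ≤ M) :
    {m ∈ Fintype.piFinset fun i => Ico (l i) M | ∀ i j, i < j → m j < l i} =
      Fintype.piFinset
        (Fin.cons (Ico (l 0) M) fun j : Fin K => Ico (l j.succ) (l j.castSucc)) := by
  have forall_cons (m : Fin (K + 1) → ℕ) :
      (∀ i, m i ∈ (Fin.cons (Ico (l 0) M) fun j : Fin K => Ico (l j.succ) (l j.castSucc) :
        Fin (K + 1) → Finset ℕ) i) ↔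
      m 0 ∈ Ico (l 0) M ∧ ∀ j : Fin K, m j.succ ∈ Ico (l j.succ) (l j.castSucc) :=
    Fin.forall_fin_succ
  ext m
  rw [mem_filter, Fintype.mem_piFinset, Fintype.mem_piFinset, forall_cons, Fin.forall_fin_succ]
  simp only [mem_Ico]
  constructor
  · rintro ⟨⟨h0, hsucc⟩, hlt⟩
    exact ⟨h0, fun j => ⟨(hsucc j).1, hlt j.castSucc j.succ Fin.castSucc_lt_succ⟩⟩
  · rintro ⟨h0, hsucc⟩
    refine ⟨⟨h0, fun j => ⟨(hsucc j).1, ?_⟩⟩, fun i j hij => ?_⟩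
    · exact (hsucc j).2.trans_le ((hl (Fin.zero_le _)).trans hM)
    · obtain ⟨k, rfl⟩ := Fin.exists_succ_eq.2 (Fin.ne_zero_of_lt hij)
      exact (hsucc k).2.trans_le (hl (Fin.le_castSucc_iff.2 hij))

/- Subtracting from each row of the determinant the previous one truncates the geometric sum
`∑ m ∈ Ico (l (j + 1)) M, x ^ m` to `∑ m ∈ Ico (l (j + 1)) (l j), x ^ m`. -/
lemma sum_alternant_piFinset_Ico {l : Fin N → ℕ} (hl : Antitone l) {M : ℕ} (hM : ∀ i, l i ≤ M) :
    ∑ m ∈ Fintype.piFinset fun i => Ico (l i) M, alternant R m =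
      ∑ m ∈ Fintype.piFinset fun i => Ico (l i) M with ∀ i j, i < j → m j < l i,
        alternant R m := by
  cases N with
  | zero => simp
  | succ K =>
    rw [piFinset_Ico_filter_lt hl (hM 0), sum_piFinset_alternant, sum_piFinset_alternant]
    refine Matrix.det_eq_of_forall_row_eq_smul_add_pred (fun _ => 1) (by simp) fun j i => ?_
    simp only [Matrix.of_apply, Fin.cons_succ, one_mul]
    exact (sum_Ico_consecutive _ (hl Fin.castSucc_lt_succ.le) (hM _)).symm

lemma piFinset_Ico_filter_sum {σ : Type*} [Fintype σ] [DecidableEq σ] (l : σ → ℕ) (a : ℕ) :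
    {m ∈ Fintype.piFinset fun i => Ico (l i) (∑ i, l i + a + 1) | ∑ i, m i = ∑ i, l i + a} =
      (piAntidiag univ a).map (addLeftEmbedding l) := by
  ext m
  simp only [mem_filter, Fintype.mem_piFinset, mem_Ico, mem_map, mem_piAntidiag, mem_univ,
    implies_true, and_true, addLeftEmbedding_apply]
  constructor
  · rintro ⟨hm, hsum⟩
    obtain ⟨b, rfl⟩ := exists_add_of_le (show l ≤ m from fun i => (hm i).1)
    exact ⟨b, by simpa [sum_add_distrib] using hsum, rfl⟩
  · rintro ⟨b, rfl, rfl⟩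
    refine ⟨fun i => ⟨Nat.le_add_right _ _, ?_⟩, sum_add_distrib⟩
    have hle : (l + b) i ≤ ∑ j, (l + b) j := single_le_sum (by simp) (mem_univ i)
    simpa [sum_add_distrib, Nat.lt_succ_iff] using hle

lemma hsymm_mul_alternant_of_antitone {l : Fin N → ℕ} (hl : Antitone l) (a : ℕ) :
    hsymm (Fin N) R a * alternant R l =
      ∑ b ∈ piAntidiag univ a with ∀ i j, i < j → (l + b) j < l i, alternant R (l + b) := by
  have hM (i) : l i ≤ ∑ i, l i + a + 1 := by
    have := single_le_sum (f := l) (fun _ _ => zero_le) (mem_univ i)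
    lia
  have key := congrArg (homogeneousComponent (∑ i, l i + a))
    (sum_alternant_piFinset_Ico (R := R) hl hM)
  rw [homogeneousComponent_sum_alternant, homogeneousComponent_sum_alternant, filter_comm,
    piFinset_Ico_filter_sum, filter_map, sum_map, sum_map] at key
  exact (hsymm_mul_alternant a l).trans key

/-- The exponents `ρ = (N - 1, …, 1, 0)` of the Vandermonde determinant, so that partitions `p`
correspond to strictly decreasing sequences `p + ρ`. -/
def staircase (N : ℕ) (i : Fin N) : ℕ := i.rev

lemma strictAnti_staircase : StrictAnti (staircase N) := fun _ _ h => Fin.rev_lt_rev.2 h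

lemma strictAnti_add_staircase {p : Fin N → ℕ} (hp : Antitone p) : StrictAnti (p + staircase N) :=
  fun _ _ h => add_lt_add_of_le_of_lt (hp h.le) (strictAnti_staircase h)

/-- The skew shape `q / p` is a horizontal strip: `p ⊆ q`, and no two of its cells lie in the same
column. -/
def IsHorizontalStrip (p q : Fin N → ℕ) : Prop := p ≤ q ∧ ∀ i j, i < j → q j ≤ p i

lemma IsHorizontalStrip.antitone {p q : Fin N → ℕ} (h : IsHorizontalStrip p q) : Antitone q :=
  antitone_iff_forall_lt.2 fun i j hij => (h.2 i j hij).trans (h.1 i)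

lemma isHorizontalStrip_add_iff {p b : Fin N → ℕ} (hp : Antitone p) :
    IsHorizontalStrip p (p + b) ↔
      ∀ i j, i < j → (p + staircase N + b) j < (p + staircase N) i := by
  constructor
  · intro h i j hij
    have hle := h.2 i j hij
    have hlt := strictAnti_staircase hij
    simp only [Pi.add_apply] at hle ⊢
    lia
  · refine fun h => ⟨le_add_of_nonneg_right fun i => zero_le, fun i j hij => ?_⟩
    have hadj := h ⟨j - 1, by lia⟩ j (by simp only [Fin.lt_def] at hij ⊢; lia)
    have hle : p ⟨j - 1, by lia⟩ ≤ p i := hp (by simp only [Fin.lt_def, Fin.le_def] at hij ⊢; lia)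
    simp only [Pi.add_apply, staircase, Fin.val_rev] at hadj ⊢
    lia

open scoped Classical in
lemma hsymm_mul_alternant_staircase {p : Fin N → ℕ} (hp : Antitone p) (a : ℕ) :
    hsymm (Fin N) R a * alternant R (p + staircase N) =
      ∑ b ∈ piAntidiag univ a with IsHorizontalStrip p (p + b),
        alternant R (p + b + staircase N) := by
  rw [hsymm_mul_alternant_of_antitone (strictAnti_add_staircase hp).antitone]
  simp only [isHorizontalStrip_add_iff hp, add_right_comm p]

open scoped Classical in
lemma esymm_mul_alternant_staircase {p : Fin N → ℕ} (hp : Antitone p) (k : ℕ) :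
    esymm (Fin N) R k * alternant R (p + staircase N) =
      ∑ S ∈ powersetCard k univ with Antitone (p + indicatorVector S),
        alternant R (p + indicatorVector S + staircase N) := by
  rw [esymm_mul_alternant, sum_filter]
  refine sum_congr rfl fun S _ => ?_
  rw [add_right_comm p]
  split_ifs with hS
  · rfl
  cases N with
  | zero => exact (hS (Subsingleton.antitone _)).elim
  | succ K =>
    rw [Fin.antitone_iff_succ_le] at hS
    push Not at hS
    obtain ⟨i, hi⟩ := hS
    refine alternant_eq_zero fun hinj => Fin.castSucc_lt_succ.ne (a := i.castSucc) (hinj ?_)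
    have hle := hp (Fin.castSucc_lt_succ (i := i)).le
    simp only [Pi.add_apply, indicatorVector, staircase,
      Fin.val_rev, Fin.val_castSucc, Fin.val_succ] at hi ⊢
    split_ifs at hi ⊢ <;> lia

end Pieri

section Branching

lemma det_eq_of_forall_row_eq_smul_add_succ {A : Type*} [CommRing A] {N : ℕ}
    {M M' : Matrix (Fin (N + 1)) (Fin (N + 1)) A} (c : Fin N → A)
    (hlast : ∀ j, M (Fin.last N) j = M' (Fin.last N) j)
    (hsucc : ∀ (i : Fin N) j, M i.castSucc j = M' i.castSucc j + c i * M i.succ j) :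
    M.det = M'.det := by
  rw [← Matrix.det_submatrix_equiv_self Fin.revPerm M,
    ← Matrix.det_submatrix_equiv_self Fin.revPerm M']
  apply Matrix.det_eq_of_forall_row_eq_smul_add_pred (fun i => c i.rev)
  · simp [hlast]
  · simp [Fin.rev_succ, Fin.rev_castSucc, hsucc]

lemma det_eq_mul_det_submatrix_castSucc {A : Type*} [CommRing A] {N : ℕ}
    {M : Matrix (Fin (N + 1)) (Fin (N + 1)) A} (hM : ∀ j : Fin N, M j.castSucc (Fin.last N) = 0) :
    M.det = M (Fin.last N) (Fin.last N) * (M.submatrix Fin.castSucc Fin.castSucc).det := by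
  rw [Matrix.det_succ_column M (Fin.last N), Fin.sum_univ_castSucc]
  simp [hM, ← two_mul, pow_mul]

lemma det_sub_mul_geom_sum {A σ : Type*} [CommRing A] [Fintype σ] [DecidableEq σ] (x : σ → A)
    (y : A) (a b : σ → ℕ) :
    (Matrix.of fun j i => (x i - y) * ∑ m ∈ Ico (a j) (b j), x i ^ m * y ^ (b j - 1 - m)).det =
      (∏ i, (x i - y)) * ∑ m ∈ Fintype.piFinset fun j => Ico (a j) (b j),
        y ^ (∑ j, (b j - 1 - m j)) * (Matrix.of fun j i => x i ^ m j).det := by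
  refine (Matrix.det_mul_row (fun i => x i - y)
    (Matrix.of fun j i => ∑ m ∈ Ico (a j) (b j), x i ^ m * y ^ (b j - 1 - m))).trans ?_
  rw [det_sum_rows]
  refine congrArg _ (sum_congr rfl fun m _ => ?_)
  rw [← prod_pow_eq_pow_sum,
    ← Matrix.det_mul_column (fun j => y ^ (b j - 1 - m j)) (Matrix.of fun j i => x i ^ m j)]
  simp only [Matrix.of_apply, mul_comm]

/- Subtracting from each row a multiple of the next one divides it by `x i - x (last N)`, which
clears the last column. -/
lemma det_pow_branching {A : Type*} [CommRing A] {N : ℕ} (x : Fin (N + 1) → A)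
    {l : Fin (N + 1) → ℕ} (hl : Antitone l) :
    (Matrix.of fun j i => x i ^ l j).det =
      (∏ i : Fin N, (x i.castSucc - x (Fin.last N))) *
        ∑ m ∈ Fintype.piFinset fun j : Fin N => Ico (l j.succ) (l j.castSucc),
          x (Fin.last N) ^ (l (Fin.last N) + ∑ j : Fin N, (l j.castSucc - 1 - m j)) *
            (Matrix.of fun j i => x (Fin.castSucc i) ^ m j).det := by
  set y := x (Fin.last N)
  let M : Matrix (Fin (N + 1)) (Fin (N + 1)) A := Matrix.of <|
    Fin.lastCases (fun i => x i ^ l (Fin.last N)) fun j i =>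
      (x i - y) * ∑ m ∈ Ico (l j.succ) (l j.castSucc), x i ^ m * y ^ (l j.castSucc - 1 - m)
  have row_ops : (Matrix.of fun j i => x i ^ l j).det = M.det := by
    refine det_eq_of_forall_row_eq_smul_add_succ
      (fun j => y ^ (l j.castSucc - l j.succ)) (by simp [M]) fun j i => ?_
    simp only [M, Matrix.of_apply, Fin.lastCases_castSucc]
    rw [mul_geom_sum₂_Ico _ _ (hl Fin.castSucc_lt_succ.le)]
    ring
  have minor : M.submatrix Fin.castSucc Fin.castSucc = Matrix.of fun j i =>
      (x (Fin.castSucc i) - y) * ∑ m ∈ Ico (l j.succ) (l j.castSucc),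
        x (Fin.castSucc i) ^ m * y ^ (l j.castSucc - 1 - m) := by
    ext j i
    simp [M]
  rw [row_ops, det_eq_mul_det_submatrix_castSucc (by simp [M, y]), minor,
    det_sub_mul_geom_sum (fun i => x (Fin.castSucc i)), mul_left_comm, mul_sum]
  simp [M, y, pow_add, mul_assoc]

lemma rename_alternant {σ τ R : Type*} [Fintype σ] [DecidableEq σ] [CommRing R] (f : σ → τ)
    (l : σ → ℕ) :
    rename f (alternant R l) = (Matrix.of fun j i => X (f i) ^ l j).det := by
  rw [alternant, AlgHom.map_det]
  congr 1
  ext1 j i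
  simp

variable {N : ℕ}

/-- The row lengths `q` interlacing with `p`, that is `p₀ ≥ q₀ ≥ p₁ ≥ q₁ ≥ ⋯ ≥ p_N`. -/
def interlacing (p : Fin (N + 1) → ℕ) : Finset (Fin N → ℕ) :=
  Fintype.piFinset fun j => Icc (p j.succ) (p j.castSucc)

lemma mem_interlacing {p : Fin (N + 1) → ℕ} {q : Fin N → ℕ} :
    q ∈ interlacing p ↔ ∀ j : Fin N, p j.succ ≤ q j ∧ q j ≤ p j.castSucc := by
  simp [interlacing]

lemma piFinset_Ico_staircase (p : Fin (N + 1) → ℕ) :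
    (Fintype.piFinset fun j : Fin N =>
        Ico ((p + staircase (N + 1)) j.succ) ((p + staircase (N + 1)) j.castSucc)) =
      (interlacing p).map (addRightEmbedding (staircase N)) := by
  ext m
  simp only [Fintype.mem_piFinset, mem_Ico, Pi.add_apply, mem_map, mem_interlacing,
    addRightEmbedding_apply, staircase, Fin.val_rev, Fin.val_succ, Fin.val_castSucc]
  constructor
  · intro hm
    refine ⟨m - staircase N, fun j => ?_, tsub_add_cancel_of_le fun j => ?_⟩
    · have := hm j
      simp only [Pi.sub_apply, staircase, Fin.val_rev]
      lia
    · have := hm j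
      simp only [staircase, Fin.val_rev]
      lia
  · rintro ⟨q, hq, rfl⟩ j
    have := hq j
    simp only [Pi.add_apply, staircase, Fin.val_rev]
    lia

variable {R : Type*} [CommRing R]

lemma alternant_branching {p : Fin (N + 1) → ℕ} (hp : Antitone p) :
    alternant R (p + staircase (N + 1)) =
      (∏ i : Fin N, (X i.castSucc - X (Fin.last N))) *
        ∑ q ∈ interlacing p, X (Fin.last N) ^ (∑ i, p i - ∑ i, q i) *
          rename Fin.castSucc (alternant R (q + staircase N)) := by
  have key := det_pow_branching (X : _ → MvPolynomial (Fin (N + 1)) R)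
    (strictAnti_add_staircase hp).antitone
  rw [piFinset_Ico_staircase, sum_map] at key
  rw [alternant, key]
  refine congrArg _ (sum_congr rfl fun q hq => ?_)
  rw [rename_alternant, addRightEmbedding_apply]
  congr 2
  rw [mem_interlacing] at hq
  have summand (j : Fin N) : (p + staircase (N + 1)) j.castSucc - 1 - (q + staircase N) j =
      p j.castSucc - q j := by
    simp only [Pi.add_apply, staircase, Fin.val_rev, Fin.val_castSucc]
    lia
  have sum_le : ∑ j, q j ≤ ∑ j : Fin N, p j.castSucc := sum_le_sum fun j _ => (hq j).2
  have last_entry : (p + staircase (N + 1)) (Fin.last N) = p (Fin.last N) := by simp [staircase]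
  rw [last_entry, sum_congr rfl fun j _ => summand j, sum_tsub_distrib _ fun j _ => (hq j).2,
    Fin.sum_univ_castSucc p]
  lia

lemma alternant_staircase_succ :
    alternant R (staircase (N + 1)) = (∏ i : Fin N, (X i.castSucc - X (Fin.last N))) *
      rename Fin.castSucc (alternant R (staircase N)) := by
  have interlacing_zero : interlacing (0 : Fin (N + 1) → ℕ) = {0} := by
    ext q
    simp [mem_interlacing, funext_iff]
  simpa [interlacing_zero] using alternant_branching (N := N) (R := R) (p := 0) fun _ _ _ => le_rfl

end Branching

section CellBranching

variable {N : ℕ} {s t : Finset (ℕ × ℕ)}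

/-- The cell set `t` arises from `s` by removing a horizontal strip: a semistandard filling of `t`
extends to `s` by one new letter, larger than all others, on the cells of `s \ t`. -/
def IsHorizontalStripRemoval (t s : Finset (ℕ × ℕ)) : Prop :=
  (∀ i j, (i, j) ∈ s → (i, j + 1) ∈ t → (i, j) ∈ t) ∧
    ∀ i j, (i, j) ∈ s → (i + 1, j) ∈ s → (i, j) ∈ t

/-- The extension to `s` of a filling of `t` with letters in `Fin N`, by the new largest letter
`Fin.last N`. -/
def extendFilling (s : Finset (ℕ × ℕ)) {t : Finset (ℕ × ℕ)} (U : t → Fin N) (c : s) :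
    Fin (N + 1) :=
  if h : (c : ℕ × ℕ) ∈ t then (U ⟨c, h⟩).castSucc else Fin.last N

lemma extendFilling_of_mem {U : t → Fin N} {c : ℕ × ℕ} (hs : c ∈ s) (ht : c ∈ t) :
    extendFilling s U ⟨c, hs⟩ = (U ⟨c, ht⟩).castSucc := dif_pos ht

lemma extendFilling_of_notMem {U : t → Fin N} {c : ℕ × ℕ} (hs : c ∈ s) (ht : c ∉ t) :
    extendFilling s U ⟨c, hs⟩ = Fin.last N := dif_neg ht

lemma extendFilling_eq_last_iff {U : t → Fin N} {c : s} :
    extendFilling s U c = Fin.last N ↔ (c : ℕ × ℕ) ∉ t := by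
  rw [extendFilling]
  split_ifs with h <;> simp [h, Fin.castSucc_ne_last]

lemma isSemistandardOn_extendFilling_iff (hts : t ⊆ s) {U : t → Fin N} :
    IsSemistandardOn s (extendFilling s U) ↔
      IsHorizontalStripRemoval t s ∧ IsSemistandardOn t U := by
  constructor
  · rintro ⟨hrow, hcol⟩
    refine ⟨⟨fun i j hij hij' => ?_, fun i j hij hij' => ?_⟩, fun i j hij hij' => ?_,
      fun i j hij hij' => ?_⟩
    · by_contra hnot
      have := hrow i j hij (hts hij')
      rw [extendFilling_of_notMem _ hnot, extendFilling_of_mem _ hij'] at this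
      exact this.not_gt (Fin.castSucc_lt_last _)
    · by_contra hnot
      have := hcol i j hij hij'
      rw [extendFilling_of_notMem _ hnot] at this
      exact this.not_ge (Fin.le_last _)
    · have := hrow i j (hts hij) (hts hij')
      rwa [extendFilling_of_mem _ hij, extendFilling_of_mem _ hij'] at this
    · have := hcol i j (hts hij) (hts hij')
      rwa [extendFilling_of_mem _ hij, extendFilling_of_mem _ hij'] at this
  · rintro ⟨⟨hleft, habove⟩, hrow, hcol⟩
    refine ⟨fun i j hij hij' => ?_, fun i j hij hij' => ?_⟩
    · by_cases ht' : (i, j + 1) ∈ t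
      · rw [extendFilling_of_mem _ ht', extendFilling_of_mem _ (hleft i j hij ht')]
        exact hrow i j _ ht'
      · rw [extendFilling_of_notMem _ ht']
        exact Fin.le_last _
    · have ht := habove i j hij hij'
      rw [extendFilling_of_mem _ ht]
      by_cases ht' : (i + 1, j) ∈ t
      · rw [extendFilling_of_mem _ ht']
        exact hcol i j ht ht'
      · rw [extendFilling_of_notMem _ ht']
        exact Fin.castSucc_lt_last _

lemma exists_extendFilling_eq (T : s → Fin (N + 1)) :
    ∃ t ⊆ s, ∃ U : t → Fin N, extendFilling s U = T := by
  refine ⟨{c ∈ s | ∃ h : c ∈ s, T ⟨c, h⟩ ≠ Fin.last N}, filter_subset _ _,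
    fun c => (T ⟨c, filter_subset _ _ c.2⟩).castPred (mem_filter.1 c.2).2.2, ?_⟩
  funext c
  simp only [extendFilling, mem_filter]
  split_ifs with h
  · simp
  · simp_all

lemma eq_of_extendFilling_eq {t' : Finset (ℕ × ℕ)} (hts : t ⊆ s) (hts' : t' ⊆ s) {U : t → Fin N}
    {U' : t' → Fin N} (h : extendFilling s U = extendFilling s U') : t = t' := by
  ext c
  by_cases hc : c ∈ s
  · have := congrFun h ⟨c, hc⟩
    rw [← not_iff_not, ← extendFilling_eq_last_iff (c := ⟨c, hc⟩) (U := U), this,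
      extendFilling_eq_last_iff]
  · exact iff_of_false (mt (@hts c) hc) (mt (@hts' c) hc)

lemma extendFilling_injective (hts : t ⊆ s) :
    Function.Injective (extendFilling s : (t → Fin N) → _) := by
  intro U U' h
  funext c
  have := congrFun h ⟨c, hts c.2⟩
  rwa [extendFilling_of_mem _ c.2, extendFilling_of_mem _ c.2, Fin.castSucc_inj] at this

lemma prod_X_extendFilling (hts : t ⊆ s) (U : t → Fin N) :
    ∏ c : s, (X (extendFilling s U c) : MvPolynomial (Fin (N + 1)) ℤ) =
      X (Fin.last N) ^ #(s \ t) * rename Fin.castSucc (∏ c : t, X (U c)) := by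
  let f (c : ℕ × ℕ) : MvPolynomial (Fin (N + 1)) ℤ :=
    if h : c ∈ t then X (U ⟨c, h⟩).castSucc else X (Fin.last N)
  have f_coe (c : s) : X (extendFilling s U c) = f c := by
    simp only [f, extendFilling]
    split_ifs <;> rfl
  rw [Fintype.prod_congr _ _ f_coe, prod_coe_sort s f, ← prod_sdiff hts, ← prod_coe_sort t,
    prod_congr rfl fun c hc => dif_neg (mem_sdiff.1 hc).2, prod_const]
  simp [f]

open scoped Classical in
lemma cellSchur_branching (N : ℕ) (s : Finset (ℕ × ℕ)) :
    cellSchur (N + 1) s = ∑ t ∈ s.powerset with IsHorizontalStripRemoval t s,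
      X (Fin.last N) ^ #(s \ t) * rename Fin.castSucc (cellSchur N t) := by
  simp only [cellSchur, map_sum, mul_sum]
  rw [sum_sigma']
  symm
  refine sum_bij (fun x _ => extendFilling s x.2) ?_ ?_ ?_ ?_
  · simp only [mem_sigma, mem_filter, mem_powerset, mem_univ, true_and]
    exact fun x hx => (isSemistandardOn_extendFilling_iff hx.1.1).2 ⟨hx.1.2, hx.2⟩
  · simp only [mem_sigma, mem_filter, mem_powerset]
    rintro ⟨t, U⟩ hx ⟨t', U'⟩ hx' h
    obtain rfl := eq_of_extendFilling_eq hx.1.1 hx'.1.1 h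
    exact congrArg (Sigma.mk t) (extendFilling_injective hx.1.1 h)
  · intro T hT
    obtain ⟨t, hts, U, rfl⟩ := exists_extendFilling_eq T
    have := (isSemistandardOn_extendFilling_iff hts).1 (mem_filter.1 hT).2
    exact ⟨⟨t, U⟩, by simp [hts, this], rfl⟩
  · intro x hx
    simp only [mem_sigma, mem_filter, mem_powerset] at hx
    exact (prod_X_extendFilling hx.1.1 x.2).symm

lemma row_le_of_isSemistandardOn (hs : IsLowerSet (s : Set (ℕ × ℕ))) {T : s → Fin N}
    (hT : IsSemistandardOn s T) {i j : ℕ} (hij : (i, j) ∈ s) : i ≤ T ⟨(i, j), hij⟩ := by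
  induction i with
  | zero => exact zero_le
  | succ i ih =>
    have habove : (i, j) ∈ s := hs (Prod.mk_le_mk.2 ⟨i.le_succ, le_rfl⟩) hij
    exact (ih habove).trans_lt (hT.2 i j habove hij)

lemma row_lt_of_cellSchur_ne_zero (hs : IsLowerSet (s : Set (ℕ × ℕ))) (h : cellSchur N s ≠ 0)
    {c : ℕ × ℕ} (hc : c ∈ s) : c.1 < N := by
  classical
  obtain ⟨T, hT, -⟩ := exists_ne_zero_of_sum_ne_zero h
  exact (row_le_of_isSemistandardOn hs (mem_filter.1 hT).2 hc).trans_lt (Fin.is_lt _)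

end CellBranching

section RowLengths

variable {N : ℕ}

/-- The left-justified cells with row lengths `p`, which form the Young diagram of a partition if
`p` is antitone. -/
def rowCells (p : Fin N → ℕ) : Finset (ℕ × ℕ) :=
  univ.biUnion fun i : Fin N => {(i : ℕ)} ×ˢ range (p i)

lemma mem_rowCells {p : Fin N → ℕ} {c : ℕ × ℕ} :
    c ∈ rowCells p ↔ ∃ i : Fin N, i = c.1 ∧ c.2 < p i := by
  obtain ⟨i, j⟩ := c
  simp [rowCells, eq_comm, and_comm]

lemma mk_mem_rowCells {p : Fin N → ℕ} {i : Fin N} {j : ℕ} :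
    ((i : ℕ), j) ∈ rowCells p ↔ j < p i := by
  simp [mem_rowCells, Fin.val_inj]

lemma card_rowCells (p : Fin N → ℕ) : #(rowCells p) = ∑ i, p i := by
  rw [rowCells, card_biUnion]
  · simp
  · intro i _ j _ hij
    simp only [disjoint_product, disjoint_singleton, ne_eq, Fin.val_inj]
    exact .inl hij

lemma rowCells_injective : Function.Injective (rowCells : (Fin N → ℕ) → _) := by
  intro p q h
  funext i
  refine eq_of_forall_lt_iff fun j => ?_
  rw [← mk_mem_rowCells, h, mk_mem_rowCells]

/-- The lengths of the first `N` rows of a Young diagram. -/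
def rowLengths (N : ℕ) (μ : YoungDiagram) (i : Fin N) : ℕ := μ.rowLen i

lemma antitone_rowLengths (N : ℕ) (μ : YoungDiagram) : Antitone (rowLengths N μ) :=
  fun _ _ h => μ.rowLen_anti _ _ h

lemma rowCells_rowLengths {μ : YoungDiagram} (hμ : ∀ c ∈ μ, c.1 < N) :
    rowCells (rowLengths N μ) = μ.cells := by
  ext ⟨i, j⟩
  rw [YoungDiagram.mem_cells, mem_rowCells]
  constructor
  · rintro ⟨_, rfl, hj⟩
    exact YoungDiagram.mem_iff_lt_rowLen.2 hj
  · exact fun h => ⟨⟨i, hμ _ h⟩, rfl, YoungDiagram.mem_iff_lt_rowLen.1 h⟩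

lemma exists_rowCells_eq {s : Finset (ℕ × ℕ)} (hs : IsLowerSet (s : Set (ℕ × ℕ)))
    (hrow : ∀ c ∈ s, c.1 < N) : ∃ q : Fin N → ℕ, rowCells q = s :=
  ⟨_, rowCells_rowLengths (μ := ⟨s, hs⟩) hrow⟩

lemma isLowerSet_rowCells {p : Fin N → ℕ} (hp : Antitone p) :
    IsLowerSet (rowCells p : Set (ℕ × ℕ)) := by
  rintro c d hdc hc
  simp only [mem_coe, mem_rowCells] at hc ⊢
  obtain ⟨i, hi, hc⟩ := hc
  refine ⟨⟨d.1, hdc.1.trans_lt (hi ▸ i.is_lt)⟩, rfl, hdc.2.trans_lt (hc.trans_le (hp ?_))⟩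
  exact Fin.le_def.2 (hdc.1.trans_eq hi.symm)

/-- The Schur polynomial of the partition with row lengths `p`. -/
noncomputable def schurOfRows (p : Fin N → ℕ) : MvPolynomial (Fin N) ℤ :=
  cellSchur N (rowCells p)

lemma schurOfRows_rowLengths {μ : YoungDiagram} (hμ : ∀ c ∈ μ, c.1 < N) :
    schurOfRows (rowLengths N μ) = schurPoly N μ := by
  rw [schurOfRows, rowCells_rowLengths hμ, schurPoly]

lemma rowCells_subset_of_mem_interlacing {p : Fin (N + 1) → ℕ} {q : Fin N → ℕ}
    (hq : q ∈ interlacing p) : rowCells q ⊆ rowCells p := by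
  intro c hc
  rw [mem_rowCells] at hc ⊢
  obtain ⟨i, hi, hc⟩ := hc
  exact ⟨i.castSucc, hi, hc.trans_le (mem_interlacing.1 hq i).2⟩

lemma isHorizontalStripRemoval_rowCells {p : Fin (N + 1) → ℕ} {q : Fin N → ℕ}
    (hq : q ∈ interlacing p) : IsHorizontalStripRemoval (rowCells q) (rowCells p) := by
  simp only [IsHorizontalStripRemoval, mem_rowCells]
  refine ⟨?_, ?_⟩
  · rintro i j - ⟨k, hk, hj⟩
    exact ⟨k, hk, j.lt_succ_self.trans hj⟩
  · rintro i j - ⟨k, hk, hj⟩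
    obtain ⟨k, rfl⟩ := Fin.exists_succ_eq.2 (show k ≠ 0 by rintro rfl; simp at hk)
    exact ⟨k, by simpa using hk, hj.trans_le (mem_interlacing.1 hq k).1⟩

lemma mem_interlacing_of_rowCells {p : Fin (N + 1) → ℕ} {q : Fin N → ℕ} (hp : Antitone p)
    (hsub : rowCells q ⊆ rowCells p) (hrem : IsHorizontalStripRemoval (rowCells q) (rowCells p)) :
    q ∈ interlacing p := by
  refine mem_interlacing.2 fun i => ⟨?_, ?_⟩
  · refine le_of_forall_lt fun j hj => mk_mem_rowCells.1 (hrem.2 _ _ ?_ ?_)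
    · exact mk_mem_rowCells (i := i.castSucc).2 (hj.trans_le (hp Fin.castSucc_lt_succ.le))
    · exact mk_mem_rowCells (i := i.succ).2 hj
  · refine le_of_forall_lt fun j hj => ?_
    exact mk_mem_rowCells (i := i.castSucc).1 (hsub (mk_mem_rowCells.2 hj))

lemma IsHorizontalStripRemoval.isLowerSet {s t : Finset (ℕ × ℕ)} (h : IsHorizontalStripRemoval t s)
    (hs : IsLowerSet (s : Set (ℕ × ℕ))) (hts : t ⊆ s) : IsLowerSet (t : Set (ℕ × ℕ)) := by
  have left {i j k : ℕ} (hk : (i, j + k) ∈ t) : (i, j) ∈ t := by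
    induction k with
    | zero => exact hk
    | succ k ih => exact ih (h.1 i (j + k) (hs (by simp) (hts hk)) hk)
  have above {i j k : ℕ} (hk : (i + k, j) ∈ t) : (i, j) ∈ t := by
    induction k with
    | zero => exact hk
    | succ k ih => exact ih (h.2 (i + k) j (hs (by simp) (hts hk)) (hts hk))
  rintro ⟨i', j'⟩ ⟨i, j⟩ hle hmem
  obtain ⟨k, rfl⟩ := Nat.exists_eq_add_of_le (Prod.mk_le_mk.1 hle).1
  obtain ⟨l, rfl⟩ := Nat.exists_eq_add_of_le (Prod.mk_le_mk.1 hle).2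
  exact above (left hmem)

lemma schurOfRows_branching {p : Fin (N + 1) → ℕ} (hp : Antitone p) :
    schurOfRows p = ∑ q ∈ interlacing p,
      X (Fin.last N) ^ (∑ i, p i - ∑ i, q i) * rename Fin.castSucc (schurOfRows q) := by
  classical
  rw [schurOfRows, cellSchur_branching]
  refine (sum_of_injOn rowCells rowCells_injective.injOn ?_ ?_ ?_).symm
  · intro q hq
    simp [isHorizontalStripRemoval_rowCells hq, rowCells_subset_of_mem_interlacing hq]
  · intro t ht hrange
    obtain ⟨hts, hrem⟩ : t ⊆ rowCells p ∧ IsHorizontalStripRemoval t (rowCells p) := by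
      simpa using ht
    have ht_lower := hrem.isLowerSet (isLowerSet_rowCells hp) hts
    suffices cellSchur N t = 0 by simp [this]
    by_contra hne
    obtain ⟨q, rfl⟩ := exists_rowCells_eq ht_lower fun c => row_lt_of_cellSchur_ne_zero ht_lower hne
    exact hrange ⟨q, mem_interlacing_of_rowCells hp hts hrem, rfl⟩
  · intro q hq
    rw [card_sdiff_of_subset (rowCells_subset_of_mem_interlacing hq), card_rowCells, card_rowCells]
    rfl

lemma schurOfRows_zero : schurOfRows (0 : Fin N → ℕ) = 1 := by
  have rowCells_zero : rowCells (0 : Fin N → ℕ) = ∅ := by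
    ext
    simp [mem_rowCells]
  rw [schurOfRows, rowCells_zero]
  simp [cellSchur, IsSemistandardOn]

end RowLengths

section Bialternant

variable {N : ℕ}

lemma antitone_of_mem_interlacing {p : Fin (N + 1) → ℕ} {q : Fin N → ℕ}
    (hq : q ∈ interlacing p) : Antitone q := by
  rw [mem_interlacing] at hq
  cases N with
  | zero => exact Subsingleton.antitone q
  | succ N => exact Fin.antitone_iff_succ_le.2 fun i => (hq i.succ).2.trans (hq i.castSucc).1

lemma alternant_eq_mul_schurOfRows {p : Fin N → ℕ} (hp : Antitone p) :
    alternant ℤ (p + staircase N) = alternant ℤ (staircase N) * schurOfRows p := by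
  induction N with
  | zero => rw [Subsingleton.elim p 0, schurOfRows_zero, mul_one, zero_add]
  | succ N ih =>
    rw [alternant_branching hp, schurOfRows_branching hp, alternant_staircase_succ, mul_assoc]
    refine congrArg _ ?_
    rw [mul_sum]
    refine sum_congr rfl fun q hq => ?_
    rw [ih (antitone_of_mem_interlacing hq), map_mul, mul_left_comm]

open scoped Classical in
lemma hsymm_mul_schurOfRows {p : Fin N → ℕ} (hp : Antitone p) (a : ℕ) :
    hsymm (Fin N) ℤ a * schurOfRows p =
      ∑ b ∈ piAntidiag univ a with IsHorizontalStrip p (p + b), schurOfRows (p + b) := by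
  refine mul_left_cancel₀ (alternant_ne_zero (R := ℤ) strictAnti_staircase) ?_
  rw [mul_left_comm, ← alternant_eq_mul_schurOfRows hp, hsymm_mul_alternant_staircase hp, mul_sum]
  exact sum_congr rfl fun b hb => alternant_eq_mul_schurOfRows (mem_filter.1 hb).2.antitone

open scoped Classical in
lemma esymm_mul_schurOfRows {p : Fin N → ℕ} (hp : Antitone p) (k : ℕ) :
    esymm (Fin N) ℤ k * schurOfRows p =
      ∑ S ∈ powersetCard k univ with Antitone (p + indicatorVector S),
        schurOfRows (p + indicatorVector S) := by
  refine mul_left_cancel₀ (alternant_ne_zero (R := ℤ) strictAnti_staircase) ?_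
  rw [mul_left_comm, ← alternant_eq_mul_schurOfRows hp, esymm_mul_alternant_staircase hp, mul_sum]
  exact sum_congr rfl fun S hS => alternant_eq_mul_schurOfRows (mem_filter.1 hS).2

end Bialternant

section Hook

variable {N : ℕ}

/-- The partition with row lengths `p` does not contain the cell in row `r` and column `c`, that
is, it fits into the hook formed by the first `r` rows and the first `c` columns. -/
def InHook (r c : ℕ) (p : Fin N → ℕ) : Prop := ∀ i : Fin N, r ≤ i → p i ≤ c

lemma InHook.of_isHorizontalStrip {r c : ℕ} {p q : Fin N → ℕ} (hp : InHook r c p)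
    (hpq : IsHorizontalStrip p q) : InHook (r + 1) c q := fun i hi =>
  (hpq.2 ⟨i - 1, by lia⟩ i (by simp only [Fin.lt_def]; lia)).trans
    (hp _ (by simpa using Nat.le_sub_one_of_lt hi))

lemma InHook.add_indicatorVector {r c : ℕ} {p : Fin N → ℕ} (hp : InHook r c p)
    (S : Finset (Fin N)) : InHook r (c + 1) (p + indicatorVector S) := by
  intro i hi
  have := hp i hi
  simp only [Pi.add_apply, indicatorVector]
  split_ifs <;> lia

/-- The span of the alternants `a_{p + ρ}` of the partitions `p` not containing the cell in row `r`
and column `c`. -/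
noncomputable def hookSpan (N r c : ℕ) : Submodule ℤ (MvPolynomial (Fin N) ℤ) :=
  .span ℤ {f | ∃ p : Fin N → ℕ, Antitone p ∧ InHook r c p ∧ alternant ℤ (p + staircase N) = f}

lemma alternant_mem_hookSpan {r c : ℕ} {p : Fin N → ℕ} (hp : Antitone p) (h : InHook r c p) :
    alternant ℤ (p + staircase N) ∈ hookSpan N r c :=
  Submodule.subset_span ⟨p, hp, h, rfl⟩

lemma coeff_eq_zero_of_mem_hookSpan {r c : ℕ} {p : Fin N → ℕ} (hp : Antitone p)
    (h : ¬ InHook r c p) {f : MvPolynomial (Fin N) ℤ} (hf : f ∈ hookSpan N r c) :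
    coeff (Finsupp.equivFunOnFinite.symm (p + staircase N)) f = 0 := by
  induction hf using Submodule.span_induction with
  | mem f hf =>
    obtain ⟨q, hq, hqh, rfl⟩ := hf
    rw [coeff_alternant (strictAnti_add_staircase hq) (strictAnti_add_staircase hp), if_neg]
    intro heq
    exact h (add_right_cancel heq ▸ hqh)
  | zero => simp
  | add f g _ _ hf hg => rw [coeff_add, hf, hg, add_zero]
  | smul z f _ hf => rw [coeff_smul, hf, smul_zero]

/-- The polynomials multiplication by which shifts the forbidden cell of every `hookSpan` by `r`
rows and `c` columns. -/
noncomputable def hookMultiplier (N r c : ℕ) : Submodule ℤ (MvPolynomial (Fin N) ℤ) :=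
  ⨅ R, ⨅ C, hookSpan N (R + r) (C + c) / hookSpan N R C

lemma mem_hookMultiplier {r c : ℕ} {f : MvPolynomial (Fin N) ℤ} :
    f ∈ hookMultiplier N r c ↔
      ∀ R C, ∀ g ∈ hookSpan N R C, f * g ∈ hookSpan N (R + r) (C + c) := by
  simp [hookMultiplier, Submodule.mem_iInf, Submodule.mem_div_iff_forall_mul_mem]

lemma mem_hookMultiplier_of_forall_alternant {r c : ℕ} {f : MvPolynomial (Fin N) ℤ}
    (h : ∀ R C (p : Fin N → ℕ), Antitone p → InHook R C p →
      f * alternant ℤ (p + staircase N) ∈ hookSpan N (R + r) (C + c)) :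
    f ∈ hookMultiplier N r c := by
  rw [mem_hookMultiplier]
  intro R C g hg
  have hle : hookSpan N R C ≤ (hookSpan N (R + r) (C + c)).comap (LinearMap.mulLeft ℤ f) := by
    refine Submodule.span_le.2 ?_
    rintro _ ⟨p, hp, hpRC, rfl⟩
    exact h R C p hp hpRC
  exact hle hg

lemma one_mem_hookMultiplier : (1 : MvPolynomial (Fin N) ℤ) ∈ hookMultiplier N 0 0 :=
  mem_hookMultiplier.2 fun R C g hg => by simpa using hg

lemma mul_mem_hookMultiplier {r c r' c' : ℕ} {f g : MvPolynomial (Fin N) ℤ}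
    (hf : f ∈ hookMultiplier N r c) (hg : g ∈ hookMultiplier N r' c') :
    f * g ∈ hookMultiplier N (r + r') (c + c') := by
  rw [mem_hookMultiplier] at *
  intro R C x hx
  rw [mul_assoc, add_comm r, add_comm c, ← add_assoc, ← add_assoc]
  exact hf _ _ _ (hg _ _ _ hx)

lemma prod_mem_hookMultiplier {ι : Type*} {s : Finset ι} {f : ι → MvPolynomial (Fin N) ℤ}
    {r c : ι → ℕ} (h : ∀ k ∈ s, f k ∈ hookMultiplier N (r k) (c k)) :
    ∏ k ∈ s, f k ∈ hookMultiplier N (∑ k ∈ s, r k) (∑ k ∈ s, c k) := by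
  classical
  induction s using Finset.induction_on with
  | empty => simpa using one_mem_hookMultiplier
  | insert k s hk ih =>
    rw [prod_insert hk, sum_insert hk, sum_insert hk]
    exact mul_mem_hookMultiplier (h k (mem_insert_self k s))
      (ih fun j hj => h j (mem_insert_of_mem hj))

lemma hsymm_mem_hookMultiplier (a : ℕ) : hsymm (Fin N) ℤ a ∈ hookMultiplier N 1 0 := by
  classical
  refine mem_hookMultiplier_of_forall_alternant fun R C p hp hRC => ?_
  rw [hsymm_mul_alternant_staircase hp]
  refine sum_mem fun b hb => ?_
  have hstrip := (mem_filter.1 hb).2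
  exact alternant_mem_hookSpan hstrip.antitone (hRC.of_isHorizontalStrip hstrip)

lemma esymm_mem_hookMultiplier (k : ℕ) : esymm (Fin N) ℤ k ∈ hookMultiplier N 0 1 := by
  classical
  refine mem_hookMultiplier_of_forall_alternant fun R C p hp hRC => ?_
  rw [esymm_mul_alternant_staircase hp]
  exact sum_mem fun S hS =>
    alternant_mem_hookSpan (mem_filter.1 hS).2 (hRC.add_indicatorVector S)

end Hook

section Triangularity

variable {N : ℕ}

lemma mem_of_sum_mem_of_forall_ne_mem {ι A T : Type*} [AddCommGroup A] [SetLike T A]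
    [AddSubgroupClass T A] {M : T} {s : Finset ι} {f : ι → A} {i : ι} (hi : i ∈ s)
    (hsum : ∑ j ∈ s, f j ∈ M) (hne : ∀ j ∈ s, j ≠ i → f j ∈ M) : f i ∈ M := by
  classical
  rw [← add_sum_erase s f hi] at hsum
  refine (add_mem_cancel_right (sum_mem fun j hj => ?_)).1 hsum
  exact hne j (mem_of_mem_erase hj) (ne_of_mem_erase hj)

lemma sub_one_add_indicatorVector_support (p : Fin N → ℕ) :
    p - 1 + indicatorVector {i | p i ≠ 0} = p := by
  funext i
  simp only [Pi.add_apply, Pi.sub_apply, Pi.one_apply, indicatorVector, mem_filter_univ]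
  split_ifs <;> lia

lemma card_support_lt_of_antitone {p q : Fin N → ℕ} (hp : Antitone p) (hq : Antitone q)
    {S : Finset (Fin N)} (hcard : #S = #{i | p i ≠ 0}) (hne : S ≠ ({i | p i ≠ 0} : Finset (Fin N)))
    (hS : ∀ i ∈ S, q i ≠ 0) : #{i | p i ≠ 0} < #{i | q i ≠ 0} := by
  obtain ⟨j, hjS, hj⟩ : ∃ j ∈ S, p j = 0 := by
    by_contra! h
    exact hne (eq_of_subset_of_card_le (fun i hi => by simpa using h i hi) hcard.ge)
  have hmem : j ∈ ({i | q i ≠ 0} : Finset (Fin N)) := by simp [hS j hjS]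
  refine card_lt_card ((ssubset_iff_of_subset fun i hi => ?_).2 ⟨j, hmem, by simp [hj]⟩)
  rw [mem_filter_univ] at hi ⊢
  have hij : i ≤ j := by
    by_contra! hji
    exact hi (Nat.le_zero.1 ((hp hji.le).trans_eq hj))
  exact fun h => hS j hjS (Nat.le_zero.1 ((hq hij).trans_eq h))

/- Removing the first column of `p`, of length `k`, and adding back vertical strips of size `k` via
Pieri's rule for `esymm k` yields `p` and partitions with more than `k` rows. -/
lemma schurOfRows_mem_hookMultiplier_zero {c : ℕ} {p : Fin N → ℕ} (hp : Antitone p)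
    (h : ∀ i, p i ≤ c) : schurOfRows p ∈ hookMultiplier N 0 c := by
  classical
  induction c generalizing p with
  | zero =>
    obtain rfl : p = 0 := funext fun i => Nat.le_zero.1 (h i)
    exact schurOfRows_zero ▸ one_mem_hookMultiplier
  | succ c ih =>
    induction hm : N - #{i | p i ≠ 0} using Nat.strong_induction_on generalizing p with
    | _ m ih_rows =>
    have ht : Antitone (p - 1) := fun i j hij => Nat.sub_le_sub_right (hp hij) 1
    have ht_le (i : Fin N) : (p - 1) i ≤ c := Nat.sub_le_of_le_add (h i)
    have pieri := mul_mem_hookMultiplier (esymm_mem_hookMultiplier #{i | p i ≠ 0}) (ih ht ht_le)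
    rw [esymm_mul_schurOfRows ht, add_zero, add_comm 1] at pieri
    suffices schurOfRows (p - 1 + indicatorVector {i | p i ≠ 0}) ∈ hookMultiplier N 0 (c + 1) by
      rwa [sub_one_add_indicatorVector_support] at this
    refine mem_of_sum_mem_of_forall_ne_mem (f := fun S => schurOfRows (p - 1 + indicatorVector S))
      ?_ pieri fun S hS hne => ?_
    · simp [sub_one_add_indicatorVector_support, hp]
    obtain ⟨hcard, hanti⟩ : #S = #{i | p i ≠ 0} ∧ Antitone (p - 1 + indicatorVector S) := by
      simpa using hS
    have more_rows := card_support_lt_of_antitone hp hanti hcard hne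
      (fun i hi => by simp [indicatorVector, hi])
    have card_le := card_le_univ {i | (p - 1 + indicatorVector S) i ≠ 0}
    rw [Fintype.card_fin] at card_le
    refine ih_rows _ (by lia) hanti (fun i => ?_) rfl
    have := ht_le i
    simp only [Pi.add_apply, indicatorVector]
    split_ifs <;> lia

/-- The row lengths of a partition with its first row removed. -/
def dropFirstRow (p : Fin N → ℕ) (i : Fin N) : ℕ := if h : i + 1 < N then p ⟨i + 1, h⟩ else 0

lemma antitone_dropFirstRow {p : Fin N → ℕ} (hp : Antitone p) : Antitone (dropFirstRow p) := by
  intro i j hij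
  simp only [dropFirstRow]
  split_ifs with hj hi
  · exact hp (by simpa using hij)
  · lia
  · exact zero_le
  · rfl

lemma isHorizontalStrip_dropFirstRow {p : Fin N → ℕ} (hp : Antitone p) :
    IsHorizontalStrip (dropFirstRow p) p := by
  refine ⟨fun i => ?_, fun i j hij => ?_⟩
  · simp only [dropFirstRow]
    split_ifs
    · exact hp (Fin.le_def.2 (Nat.le_succ i))
    · exact zero_le
  · rw [dropFirstRow, dif_pos (by lia)]
    exact hp (Fin.le_def.2 hij)

lemma InHook.dropFirstRow {r c : ℕ} {p : Fin N → ℕ} (h : InHook (r + 1) c p) :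
    InHook r c (dropFirstRow p) := by
  intro i hi
  simp only [_root_.dropFirstRow]
  split_ifs
  · exact h _ (by simpa using hi)
  · exact zero_le

lemma IsHorizontalStrip.le_of_dropFirstRow {p q : Fin N → ℕ}
    (h : IsHorizontalStrip (dropFirstRow p) q) {i : Fin N} (hi : 0 < (i : ℕ)) : q i ≤ p i := by
  have := h.2 ⟨i - 1, by lia⟩ i (by simp only [Fin.lt_def]; lia)
  simpa [dropFirstRow, Nat.sub_add_cancel hi] using this

lemma sum_mul_lt_sum_mul {p q : Fin N → ℕ} (hne : q ≠ p) (hsum : ∑ i, q i = ∑ i, p i)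
    (hle : ∀ i : Fin N, 0 < (i : ℕ) → q i ≤ p i) : ∑ i : Fin N, i * q i < ∑ i : Fin N, i * p i := by
  cases N with
  | zero => exact (hne (Subsingleton.elim _ _)).elim
  | succ N =>
    have tail_le (i : Fin N) : q i.succ ≤ p i.succ := hle i.succ i.val.succ_pos
    rw [Fin.sum_univ_succ, Fin.sum_univ_succ p] at hsum
    obtain ⟨i, hi⟩ : ∃ i : Fin N, q i.succ < p i.succ := by
      by_contra! h
      have tail_eq (i : Fin N) : q i.succ = p i.succ := (tail_le i).antisymm (h i)
      rw [sum_congr rfl fun i _ => tail_eq i, add_left_inj] at hsum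
      exact hne (funext (Fin.cases hsum tail_eq))
    simp only [Fin.sum_univ_succ, Fin.val_zero, zero_mul, zero_add]
    exact sum_lt_sum (fun j _ => Nat.mul_le_mul_left _ (tail_le j))
      ⟨i, mem_univ i, Nat.mul_lt_mul_of_pos_left hi i.val.succ_pos⟩

/- Removing the first row of `p`, of length `a`, and adding back horizontal strips of size `a` via
Pieri's rule for `hsymm a` yields `p` and partitions with a longer first row. -/
lemma schurOfRows_mem_hookMultiplier {r c : ℕ} {p : Fin N → ℕ} (hp : Antitone p)
    (h : InHook r c p) : schurOfRows p ∈ hookMultiplier N r c := by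
  classical
  induction r generalizing p with
  | zero => exact schurOfRows_mem_hookMultiplier_zero hp fun i => h i zero_le
  | succ r ih =>
    induction hm : ∑ i : Fin N, i * p i using Nat.strong_induction_on generalizing p with
    | _ m ih_first =>
    set t := dropFirstRow p
    have ht : Antitone t := antitone_dropFirstRow hp
    have hstrip : IsHorizontalStrip t p := isHorizontalStrip_dropFirstRow hp
    obtain ⟨b, hb⟩ := exists_add_of_le hstrip.1
    have pieri := mul_mem_hookMultiplier (hsymm_mem_hookMultiplier (∑ i, b i))
      (ih ht h.dropFirstRow)
    rw [hsymm_mul_schurOfRows ht, zero_add, add_comm 1] at pieri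
    rw [hb]
    refine mem_of_sum_mem_of_forall_ne_mem (i := b) ?_ pieri fun b' hb' hne => ?_
    · simpa [← hb] using hstrip
    obtain ⟨hsum, hstrip'⟩ : ∑ i, b' i = ∑ i, b i ∧ IsHorizontalStrip t (t + b') := by
      simpa using hb'
    refine ih_first _ ?_ hstrip'.antitone (h.dropFirstRow.of_isHorizontalStrip hstrip') rfl
    rw [← hm]
    refine sum_mul_lt_sum_mul (fun heq => hne (add_left_cancel (heq.trans hb))) ?_
      fun i hi => hstrip'.le_of_dropFirstRow hi
    simp [hb, sum_add_distrib, hsum]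

lemma schurPoly_mem_hookMultiplier {μ : YoungDiagram} {r c : ℕ} (h : (r, c) ∉ μ) :
    schurPoly N μ ∈ hookMultiplier N r c := by
  by_cases hzero : schurPoly N μ = 0
  · exact hzero ▸ zero_mem _
  have hrows (x) (hx : x ∈ μ) : x.1 < N := row_lt_of_cellSchur_ne_zero μ.isLowerSet hzero hx
  rw [← schurOfRows_rowLengths hrows]
  refine schurOfRows_mem_hookMultiplier (antitone_rowLengths N μ) fun i hi => ?_
  rw [YoungDiagram.mem_iff_lt_rowLen, not_lt] at h
  exact (μ.rowLen_anti r i hi).trans h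

end Triangularity

section OuterCorners

variable {N : ℕ}

lemma row_lt_of_colLen_zero_le {μ : YoungDiagram} (h : μ.colLen 0 ≤ N) {c : ℕ × ℕ} (hc : c ∈ μ) :
    c.1 < N :=
  (YoungDiagram.mem_iff_lt_colLen.1 (μ.up_left_mem le_rfl (Nat.zero_le c.2) hc)).trans_le h

lemma eq_of_rowLengths_eq {μ ν : YoungDiagram} (hμ : μ.colLen 0 ≤ N) (hν : ν.colLen 0 ≤ N)
    (h : rowLengths N μ = rowLengths N ν) : μ = ν := by
  apply YoungDiagram.ext
  rw [← rowCells_rowLengths fun _ => row_lt_of_colLen_zero_le hμ, h,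
    rowCells_rowLengths fun _ => row_lt_of_colLen_zero_le hν]

lemma schurPoly_mul_alternant_staircase {μ : YoungDiagram} (hμ : μ.colLen 0 ≤ N) :
    schurPoly N μ * alternant ℤ (staircase N) = alternant ℤ (rowLengths N μ + staircase N) := by
  rw [← schurOfRows_rowLengths fun _ => row_lt_of_colLen_zero_le hμ, mul_comm,
    alternant_eq_mul_schurOfRows (antitone_rowLengths N μ)]

lemma coeff_sum_schurPoly_mul_alternant_staircase {S : Finset YoungDiagram}
    (hrows : ∀ μ ∈ S, μ.colLen 0 ≤ N) (co : YoungDiagram → ℤ) {lam : YoungDiagram}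
    (hlam : lam ∈ S) :
    coeff (Finsupp.equivFunOnFinite.symm (rowLengths N lam + staircase N))
      ((∑ μ ∈ S, co μ • schurPoly N μ) * alternant ℤ (staircase N)) = co lam := by
  have hstrict (μ) : StrictAnti (rowLengths N μ + staircase N) :=
    strictAnti_add_staircase (antitone_rowLengths N μ)
  rw [sum_mul, coeff_sum, sum_eq_single_of_mem lam hlam]
  · rw [smul_mul_assoc, coeff_smul, schurPoly_mul_alternant_staircase (hrows lam hlam),
      coeff_alternant (hstrict lam) (hstrict lam), if_pos rfl, smul_eq_mul, mul_one]
  · intro μ hμ hne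
    rw [smul_mul_assoc, coeff_smul, schurPoly_mul_alternant_staircase (hrows μ hμ),
      coeff_alternant (hstrict μ) (hstrict lam), if_neg, smul_zero]
    exact fun h => hne (eq_of_rowLengths_eq (hrows μ hμ) (hrows lam hlam) (add_right_cancel h))

lemma alternant_staircase_mem_hookSpan : alternant ℤ (staircase N) ∈ hookSpan N 0 0 := by
  simpa using alternant_mem_hookSpan (p := (0 : Fin N → ℕ)) antitone_const fun _ _ => le_rfl

lemma not_inHook_rowLengths {μ : YoungDiagram} {r c : ℕ} (hμ : μ.colLen 0 ≤ N) (h : (r, c) ∈ μ) :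
    ¬ InHook r c (rowLengths N μ) := fun hook =>
  (hook ⟨r, row_lt_of_colLen_zero_le hμ h⟩ le_rfl).not_gt (YoungDiagram.mem_iff_lt_rowLen.1 h)

theorem multiLR_outer_corner_bound_general {ι : Type*} [Fintype ι]
    (lam : YoungDiagram) (mu : ι → YoungDiagram) (N : ℕ)
    (S : Finset YoungDiagram) (co : YoungDiagram → ℤ)
    (hrows : ∀ l ∈ S, l.colLen 0 ≤ N)
    (hexp : ∏ k, schurPoly N (mu k) = ∑ l ∈ S, co l • schurPoly N l)
    (hlam : lam ∈ S) (hne : co lam ≠ 0)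
    (cr : ι → ℕ × ℕ) (hcr : ∀ k, ((cr k).2, (cr k).1) ∉ mu k) :
    (∑ k, (cr k).2, ∑ k, (cr k).1) ∉ lam := by
  intro hmem
  have product_mem : ∏ k, schurPoly N (mu k) ∈ hookMultiplier N (∑ k, (cr k).2) (∑ k, (cr k).1) :=
    prod_mem_hookMultiplier fun k _ => schurPoly_mem_hookMultiplier (hcr k)
  have product_alternant_mem := mem_hookMultiplier.1 product_mem 0 0 _
    alternant_staircase_mem_hookSpan
  rw [zero_add, zero_add, hexp] at product_alternant_mem
  refine hne ?_
  rw [← coeff_sum_schurPoly_mul_alternant_staircase hrows co hlam]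
  exact coeff_eq_zero_of_mem_hookSpan (antitone_rowLengths N lam)
    (not_inHook_rowLengths (hrows lam hlam) hmem) product_alternant_mem

end OuterCorners

/-- **Positivity condition for the multi-Littlewood–Richardson coefficients.**
Let `n ≥ 1` and let `λ, μ⁰, …, μ^{n-1}` be partitions (Young diagrams).  The
multi-LR coefficient `c^λ_{μ⁰,…,μ^{n-1}}` is the coefficient of `s_λ` in the Schur
expansion of `s_{μ⁰} ⋯ s_{μ^{n-1}}` in `N ≥ |μ⁰| + ⋯ + |μ^{n-1}|` variables; here
this expansion is encoded by a finitely supported coefficient family `co`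
(supported on diagrams with at most `N` rows, which makes it unique).
If `c^λ_{μ⁰,…,μ^{n-1}} ≠ 0` then for every choice of outer corners
`(c_k, r_k) ∈ OC(μ^k)`, the point `(c_0 + ⋯ + c_{n-1}, r_0 + ⋯ + r_{n-1})` does not
belong to `[λ]`, i.e. `λ_{r_0+⋯+r_{n-1}+1} ≤ c_0 + ⋯ + c_{n-1}`; that is,
`[λ] ⊆ ⟨Σ_k OC(μ^k)⟩^c`. -/
theorem multiLR_outer_corner_bound {n : ℕ} (hn : 0 < n)
    (lam : YoungDiagram) (mu : Fin n → YoungDiagram)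
    (N : ℕ) (hN : ∑ k, (mu k).cells.card ≤ N)
    (co : YoungDiagram →₀ ℕ)
    (hrows : ∀ l ∈ co.support, l.colLen 0 ≤ N)
    (hexp : ∏ k, schurPoly N (mu k) = ∑ l ∈ co.support, (co l : ℤ) • schurPoly N l)
    (hne : co lam ≠ 0)
    (cr : Fin n → ℕ × ℕ) (hcr : ∀ k, IsOuterCorner (mu k) (cr k).1 (cr k).2) :
    (∑ k, (cr k).2, ∑ k, (cr k).1) ∉ lam ∧
      lam.rowLen (∑ k, (cr k).2) ≤ ∑ k, (cr k).1 := by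
  have hnot_mem : (∑ k, (cr k).2, ∑ k, (cr k).1) ∉ lam :=
    multiLR_outer_corner_bound_general lam mu N co.support (fun l => co l) hrows hexp
      (Finsupp.mem_support_iff.2 hne) (Nat.cast_ne_zero.2 hne) cr fun k => (hcr k).1
  exact ⟨hnot_mem, not_lt.1 (mt YoungDiagram.mem_iff_lt_rowLen.2 hnot_mem)⟩
end

section
/- Let n ≥ 1 and let λ, μ be partitions. If the SXP coefficient ⟨s_μ, p_n ∘ s_λ⟩ is nonzero, then [λ] ⊆ [μ], i.e. λ_i ≤ μ_i for all i. -/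
open MvPolynomial Finset

/-!
Skewing by the complete symmetric functions reads off coefficients of a power of the last
variable: `s_l(x₁, …, x_N, t) = ∑ m, t ^ m * (h_m^⊥ s_l)(x₁, …, x_N)`. Substituting `xᵢⁿ` for
`xᵢ` shows that `h_m^⊥ (p_n ∘ w) = p_n ∘ (h_{m/n}^⊥ w)`, which is to be read as `0` unless `n ∣ m`.
The identity `∑ (-1)^i e_i h_{m-i} = 0` transports this rule to the operators `(-1)^m e_m^⊥`.

On the other hand, all diagrams in the Schur expansion of `u` contain the cell `(a + 1, b)` if and
only if those of every `h_m^⊥ u` contain `(a, b)`: if the diagrams of `u` avoiding `(a + 1, b)` have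
first row at most `m`, no cancellation occurs in the coefficients of `h_m^⊥ u` obtained by deleting
a first row of length `m`. By conjugation, `(a, b + 1)` is related to `e_m^⊥` in the same way. Since
the diagrams of `u` contain `(0, 0)` if and only if `u` has no constant term, induction on the cell
shows that each cell common to all diagrams of `w` is common to all diagrams of `p_n ∘ w`.
-/

namespace SXP

open scoped PowerSeries

section General

theorem sum_Icc_neg_one_pow_card {α : Type*} [DecidableEq α] (s t : Finset α) :
    ∑ u ∈ Icc s t, (-1 : ℤ) ^ #u = if s = t then (-1) ^ #s else 0 := by
  by_cases hst : s ⊆ t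
  · have hdisj : ∀ u ∈ (t \ s).powerset, Disjoint s u := fun u hu =>
      disjoint_sdiff.mono_right (mem_powerset.1 hu)
    rw [Icc_eq_image_powerset hst, sum_image]
    · have hcard : ∀ u ∈ (t \ s).powerset, (-1 : ℤ) ^ #(s ∪ u) = (-1) ^ #s * (-1) ^ #u :=
        fun u hu => by rw [card_union_of_disjoint (hdisj u hu), pow_add]
      rw [sum_congr rfl hcard, ← mul_sum, sum_powerset_neg_one_pow_card]
      simp only [sdiff_eq_empty_iff_subset, mul_ite, mul_one, mul_zero]
      exact if_congr ⟨hst.antisymm, fun h => h.ge⟩ rfl rfl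
    · intro u hu v hv huv
      calc u = (s ∪ u) \ s := (union_sdiff_cancel_left (hdisj u hu)).symm
        _ = (s ∪ v) \ s := congrArg (· \ s) huv
        _ = v := union_sdiff_cancel_left (hdisj v hv)
  · rw [Icc_eq_empty hst, sum_empty, if_neg fun h => hst h.le]

variable {R : Type*} [Semiring R]

/-- The power series `f(t ^ n)`. Unlike `PowerSeries.expand`, it is available over
noncommutative coefficients, which are operators here. -/
noncomputable def stretch (n : ℕ) (f : R⟦X⟧) : R⟦X⟧ :=
  PowerSeries.mk fun m => if n ∣ m then PowerSeries.coeff (m / n) f else 0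

theorem coeff_stretch (n m : ℕ) (f : R⟦X⟧) :
    PowerSeries.coeff m (stretch n f) = if n ∣ m then PowerSeries.coeff (m / n) f else 0 :=
  PowerSeries.coeff_mk _ _

theorem coeff_zero_stretch (n : ℕ) (f : R⟦X⟧) :
    PowerSeries.coeff 0 (stretch n f) = PowerSeries.coeff 0 f := by
  simp [coeff_stretch]

theorem stretch_one {n : ℕ} (hn : 0 < n) : stretch n (1 : R⟦X⟧) = 1 := by
  ext m
  rw [coeff_stretch, PowerSeries.coeff_one, PowerSeries.coeff_one]
  obtain rfl | hm := m.eq_zero_or_pos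
  · simp
  · rw [if_neg hm.ne']
    exact ite_eq_right_iff.2 fun hdvd => if_neg (Nat.div_pos (Nat.le_of_dvd hm hdvd) hn).ne'

theorem stretch_mul {n : ℕ} (hn : 0 < n) (f g : R⟦X⟧) :
    stretch n (f * g) = stretch n f * stretch n g := by
  ext m
  simp only [coeff_stretch, PowerSeries.coeff_mul]
  split_ifs with hm
  · obtain ⟨k, rfl⟩ := hm
    rw [Nat.mul_div_cancel_left _ hn]
    refine sum_of_injOn (fun p => (n * p.1, n * p.2)) ?_ ?_ ?_ ?_
    · rintro ⟨i, j⟩ - ⟨i', j'⟩ - h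
      simpa [hn.ne'] using h
    · rintro ⟨i, j⟩ h
      simp_all [← mul_add]
    · rintro ⟨i, j⟩ hij hnot
      by_contra hne
      obtain ⟨⟨i', rfl⟩, ⟨j', rfl⟩⟩ : n ∣ i ∧ n ∣ j := by grind
      refine hnot ⟨(i', j'), ?_, rfl⟩
      simpa [← mul_add, hn.ne'] using hij
    · rintro ⟨i, j⟩ -
      simp [Nat.mul_div_cancel_left _ hn]
  · refine (sum_eq_zero fun p hp => ?_).symm
    rw [HasAntidiagonal.mem_antidiagonal] at hp
    have : ¬ (n ∣ p.1 ∧ n ∣ p.2) := fun h => hm (hp ▸ dvd_add h.1 h.2)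
    grind

theorem coeff_stretch_apply_mem {S M : Type*} [Semiring S] [AddCommMonoid M] [Module S M]
    {W : Submodule S M} {F : (Module.End S M)⟦X⟧} {x : M}
    (h : ∀ m, PowerSeries.coeff m F x ∈ W) (n m : ℕ) :
    PowerSeries.coeff m (stretch n F) x ∈ W := by
  rw [coeff_stretch]
  split_ifs
  · exact h _
  · exact W.zero_mem

theorem leftInverse_coeff_mem {S M M' : Type*} [Ring S] [AddCommGroup M] [Module S M]
    [AddCommGroup M'] [Module S M'] {H E : (Module.End S M)⟦X⟧} {H' E' : (Module.End S M')⟦X⟧}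
    (hEH : E * H = 1) (hEH' : E' * H' = 1) (hH : PowerSeries.coeff 0 H = 1)
    (hH' : PowerSeries.coeff 0 H' = 1) (W : Submodule S (M × M'))
    (hW : ∀ m x y, (x, y) ∈ W → (PowerSeries.coeff m H x, PowerSeries.coeff m H' y) ∈ W)
    (m : ℕ) {x : M} {y : M'} (hxy : (x, y) ∈ W) :
    (PowerSeries.coeff m E x, PowerSeries.coeff m E' y) ∈ W := by
  induction m using Nat.strong_induction_on generalizing x y with
  | _ m ih =>
    have hsum : ∑ p ∈ antidiagonal m, (PowerSeries.coeff p.1 E (PowerSeries.coeff p.2 H x),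
        PowerSeries.coeff p.1 E' (PowerSeries.coeff p.2 H' y)) ∈ W := by
      have hmul : ∑ p ∈ antidiagonal m, (PowerSeries.coeff p.1 E (PowerSeries.coeff p.2 H x),
          PowerSeries.coeff p.1 E' (PowerSeries.coeff p.2 H' y)) =
          (PowerSeries.coeff m (E * H) x, PowerSeries.coeff m (E' * H') y) := by
        ext <;> simp [PowerSeries.coeff_mul, Prod.fst_sum, Prod.snd_sum]
      rw [hmul, hEH, hEH', PowerSeries.coeff_one, PowerSeries.coeff_one]
      split_ifs
      · exact hxy
      · exact W.zero_mem
    have htop : (m, 0) ∈ antidiagonal m := by simp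
    rw [← add_sum_erase _ _ htop, hH, hH'] at hsum
    refine (W.add_mem_iff_left (W.sum_mem fun p hp => ih p.1 ?_ (hW p.2 x y hxy))).1 hsum
    rw [mem_erase, HasAntidiagonal.mem_antidiagonal, ne_eq, Prod.ext_iff] at hp
    omega

theorem isLowerSet_of_adjacent {s : Set (ℕ × ℕ)} (hrow : ∀ i j, (i + 1, j) ∈ s → (i, j) ∈ s)
    (hcol : ∀ i j, (i, j + 1) ∈ s → (i, j) ∈ s) : IsLowerSet s := by
  rintro ⟨i, j⟩ ⟨i', j'⟩ ⟨hi, hj⟩ h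
  exact Nat.decreasingInduction (motive := fun k _ => (k, j') ∈ s) (fun k _ => hrow k j')
    (Nat.decreasingInduction (motive := fun k _ => (i, k) ∈ s) (fun k _ => hcol i k) h hj) hi

end General

section Strips

/-- The skew shape `l / ν` is a horizontal strip: no two of its cells share a column. -/
def IsHorizontalStrip (ν l : YoungDiagram) : Prop :=
  ν ≤ l ∧ ∀ i j, (i + 1, j) ∈ l → (i, j) ∈ ν

/-- The skew shape `l / ν` is a vertical strip: no two of its cells share a row. -/
def IsVerticalStrip (ν l : YoungDiagram) : Prop :=
  IsHorizontalStrip ν.transpose l.transpose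

theorem isVerticalStrip_iff {ν l : YoungDiagram} :
    IsVerticalStrip ν l ↔ ν ≤ l ∧ ∀ i j, (i, j + 1) ∈ l → (i, j) ∈ ν := by
  simp only [IsVerticalStrip, IsHorizontalStrip, YoungDiagram.transpose_le_iff,
    YoungDiagram.mem_transpose, Prod.swap_prod_mk]
  exact and_congr_right fun _ => forall_comm

theorem isHorizontalStrip_refl (l : YoungDiagram) : IsHorizontalStrip l l :=
  ⟨le_rfl, fun _ _ h => l.up_left_mem (Nat.le_succ _) le_rfl h⟩

theorem cells_injective : Function.Injective YoungDiagram.cells := fun _ _ => YoungDiagram.ext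

theorem eq_of_le_of_card_le {ν l : YoungDiagram} (hle : ν ≤ l) (hcard : l.card ≤ ν.card) :
    ν = l :=
  cells_injective (eq_of_subset_of_card_le (YoungDiagram.cells_subset_iff.2 hle) hcard)

theorem finite_setOf_isHorizontalStrip (l : YoungDiagram) : {ν | IsHorizontalStrip ν l}.Finite :=
  (l.cells.powerset.finite_toSet.preimage cells_injective.injOn).subset fun _ hν =>
    mem_coe.2 (mem_powerset.2 (YoungDiagram.cells_subset_iff.2 hν.1))

/-- The diagrams obtained from `l` by removing a horizontal strip. -/
noncomputable def horizontalStrips (l : YoungDiagram) : Finset YoungDiagram :=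
  (finite_setOf_isHorizontalStrip l).toFinset

theorem mem_horizontalStrips {ν l : YoungDiagram} :
    ν ∈ horizontalStrips l ↔ IsHorizontalStrip ν l :=
  Set.Finite.mem_toFinset _

/-- The smallest set of cells `ρ` containing `ν` such that `l / ρ` is a horizontal strip. -/
def stripLower (ν l : YoungDiagram) : Finset (ℕ × ℕ) :=
  ν.cells ∪ {c ∈ l.cells | (c.1 + 1, c.2) ∈ l}

/-- The largest set of cells `ρ` contained in `l` such that `ρ / ν` is a vertical strip. -/
def stripUpper (ν l : YoungDiagram) : Finset (ℕ × ℕ) :=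
  {c ∈ l.cells | c.2 = 0 ∨ (c.1, c.2 - 1) ∈ ν}

theorem mem_stripLower {ν l : YoungDiagram} {i j : ℕ} :
    (i, j) ∈ stripLower ν l ↔ (i, j) ∈ ν ∨ (i + 1, j) ∈ l := by
  simp only [stripLower, mem_union, mem_filter, YoungDiagram.mem_cells]
  exact or_congr_right (and_iff_right_of_imp fun h => l.up_left_mem (Nat.le_succ i) le_rfl h)

theorem mem_stripUpper {ν l : YoungDiagram} {i j : ℕ} :
    (i, j) ∈ stripUpper ν l ↔ (i, j) ∈ l ∧ (j = 0 ∨ (i, j - 1) ∈ ν) := by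
  simp only [stripUpper, mem_filter, YoungDiagram.mem_cells]

theorem isHorizontalStrip_and_isVerticalStrip_iff {ν ρ l : YoungDiagram} :
    IsHorizontalStrip ρ l ∧ IsVerticalStrip ν ρ ↔
      ρ.cells ∈ Icc (stripLower ν l) (stripUpper ν l) := by
  rw [isVerticalStrip_iff, mem_Icc]
  constructor
  · rintro ⟨⟨hρl, hhor⟩, hνρ, hver⟩
    refine ⟨fun ⟨i, j⟩ h => ?_, fun ⟨i, j⟩ h => mem_stripUpper.2 ⟨hρl h, ?_⟩⟩
    · exact (mem_stripLower.1 h).elim (fun h => hνρ h) (hhor i j)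
    · cases j with
      | zero => exact Or.inl rfl
      | succ j => exact Or.inr (hver i j h)
  · rintro ⟨hlower, hupper⟩
    refine ⟨⟨fun ⟨i, j⟩ h => (mem_stripUpper.1 (hupper h)).1, fun i j h =>
      hlower (mem_stripLower.2 (Or.inr h))⟩, fun ⟨i, j⟩ h => hlower (mem_stripLower.2 (Or.inl h)),
      fun i j h => ?_⟩
    exact (mem_stripUpper.1 (hupper h)).2.resolve_left (Nat.succ_ne_zero j)

theorem isLowerSet_of_mem_Icc_strip {ν l : YoungDiagram} {s : Finset (ℕ × ℕ)}
    (hs : s ∈ Icc (stripLower ν l) (stripUpper ν l)) : IsLowerSet (s : Set (ℕ × ℕ)) := by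
  obtain ⟨hlower, hupper⟩ := mem_Icc.1 hs
  refine isLowerSet_of_adjacent (fun i j h => hlower (mem_stripLower.2 (Or.inr ?_)))
    fun i j h => hlower (mem_stripLower.2 (Or.inl ?_))
  · exact (mem_stripUpper.1 (hupper h)).1
  · exact (mem_stripUpper.1 (hupper h)).2.resolve_left (Nat.succ_ne_zero j)

theorem stripLower_self (l : YoungDiagram) : stripLower l l = l.cells :=
  union_eq_left.2 (filter_subset _ _)

theorem stripUpper_self (l : YoungDiagram) : stripUpper l l = l.cells :=
  filter_true_of_mem fun _ h => Or.inr (l.up_left_mem le_rfl (Nat.sub_le _ _) h)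

theorem stripLower_eq_stripUpper_iff {ν l : YoungDiagram} :
    stripLower ν l = stripUpper ν l ↔ l = ν := by
  refine ⟨fun h => ?_, fun h => by rw [h, stripLower_self, stripUpper_self]⟩
  have hνl : ν ≤ l := fun ⟨i, j⟩ hij =>
    (mem_stripUpper.1 (h.le (mem_stripLower.2 (Or.inl hij)))).1
  refine hνl.antisymm' ?_
  by_contra hlν
  rw [← YoungDiagram.cells_subset_iff, ← sdiff_nonempty] at hlν
  obtain ⟨⟨i, j⟩, hij, hmax⟩ := exists_max_image _ Prod.fst hlν
  simp only [mem_sdiff, YoungDiagram.mem_cells] at hij hmax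
  have hnotMem : (i, ν.rowLen i) ∉ ν := by simp [YoungDiagram.mem_iff_lt_rowLen]
  have hmem : (i, ν.rowLen i) ∈ stripUpper ν l := by
    rw [YoungDiagram.mem_iff_lt_rowLen, YoungDiagram.mem_iff_lt_rowLen] at hij
    rw [mem_stripUpper, YoungDiagram.mem_iff_lt_rowLen, YoungDiagram.mem_iff_lt_rowLen]
    omega
  have hbelow : (i + 1, ν.rowLen i) ∈ l := (mem_stripLower.1 (h.ge hmem)).resolve_left hnotMem
  have hbelow' : (i + 1, ν.rowLen i) ∈ ν := by
    by_contra hν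
    exact (hmax _ ⟨hbelow, hν⟩).not_gt (Nat.lt_succ_self i)
  exact hnotMem (ν.up_left_mem (Nat.le_succ i) le_rfl hbelow')

open scoped Classical in
theorem sum_isVerticalStrip_neg_one_pow_card (ν l : YoungDiagram) :
    ∑ ρ ∈ horizontalStrips l with IsVerticalStrip ν ρ, (-1 : ℤ) ^ ρ.card =
      if l = ν then (-1) ^ ν.card else 0 := by
  have hIcc : ∑ ρ ∈ horizontalStrips l with IsVerticalStrip ν ρ, (-1 : ℤ) ^ ρ.card =
      ∑ s ∈ Icc (stripLower ν l) (stripUpper ν l), (-1) ^ #s := by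
    refine sum_nbij YoungDiagram.cells (fun ρ hρ => ?_) cells_injective.injOn
      (fun s hs => ?_) fun _ _ => rfl
    · rw [mem_filter, mem_horizontalStrips] at hρ
      exact isHorizontalStrip_and_isVerticalStrip_iff.1 hρ
    · refine ⟨⟨s, isLowerSet_of_mem_Icc_strip hs⟩, ?_, rfl⟩
      rw [mem_coe, mem_filter, mem_horizontalStrips]
      exact isHorizontalStrip_and_isVerticalStrip_iff.2 hs
  rw [hIcc, sum_Icc_neg_one_pow_card]
  refine ite_congr (propext stripLower_eq_stripUpper_iff) (fun h => ?_) fun _ => rfl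
  rw [h, stripLower_self]

end Strips

section RemoveFirstRow

/-- The diagram `(l₁, l₂, …)` of a partition `(l₀, l₁, l₂, …)`. -/
def removeFirstRow (l : YoungDiagram) : YoungDiagram where
  cells := {c ∈ l.cells | (c.1 + 1, c.2) ∈ l}
  isLowerSet := by
    rintro ⟨i, j⟩ ⟨i', j'⟩ ⟨hi, hj⟩ h
    simp only [coe_filter, YoungDiagram.mem_cells, Set.mem_ofPred_eq] at h ⊢
    exact ⟨l.up_left_mem hi hj h.1, l.up_left_mem (Nat.succ_le_succ hi) hj h.2⟩

variable {ν l l' : YoungDiagram}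

theorem mem_removeFirstRow {i j : ℕ} : (i, j) ∈ removeFirstRow l ↔ (i + 1, j) ∈ l :=
  mem_filter.trans (and_iff_right_of_imp fun h => l.up_left_mem (Nat.le_succ i) le_rfl h)

theorem card_removeFirstRow_add_rowLen (l : YoungDiagram) :
    (removeFirstRow l).card + l.rowLen 0 = l.card := by
  have hrest : (removeFirstRow l).card = #{c ∈ l.cells | ¬ c.1 = 0} := by
    refine card_nbij' (fun c => (c.1 + 1, c.2)) (fun c => (c.1 - 1, c.2)) ?_ ?_ ?_ ?_
    · rintro ⟨i, j⟩ h
      simpa using mem_removeFirstRow.1 h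
    · rintro ⟨_ | i, j⟩ h
      · simp at h
      · exact mem_removeFirstRow.2 (by simpa using h)
    · exact fun _ _ => rfl
    · rintro ⟨_ | i, j⟩ h
      · simp at h
      · rfl
  rw [hrest, YoungDiagram.rowLen_eq_card, add_comm]
  exact card_filter_add_card_filter_not _

theorem eq_of_removeFirstRow_eq (hrest : removeFirstRow l = removeFirstRow l')
    (hrow : l.rowLen 0 = l'.rowLen 0) : l = l' := by
  ext ⟨_ | i, j⟩
  · rw [YoungDiagram.mem_cells, YoungDiagram.mem_cells, YoungDiagram.mem_iff_lt_rowLen,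
      YoungDiagram.mem_iff_lt_rowLen, hrow]
  · rw [YoungDiagram.mem_cells, YoungDiagram.mem_cells, ← mem_removeFirstRow, hrest,
      mem_removeFirstRow]

theorem isHorizontalStrip_removeFirstRow (l : YoungDiagram) :
    IsHorizontalStrip (removeFirstRow l) l :=
  ⟨fun _ h => l.up_left_mem (Nat.le_succ _) le_rfl (mem_removeFirstRow.1 h),
    fun _ _ => mem_removeFirstRow.2⟩

theorem IsHorizontalStrip.removeFirstRow_le (h : IsHorizontalStrip ν l) : removeFirstRow l ≤ ν :=
  fun ⟨i, j⟩ hij => h.2 i j (mem_removeFirstRow.1 hij)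

theorem eq_of_isHorizontalStrip_removeFirstRow (h : IsHorizontalStrip (removeFirstRow l) l')
    (hcard : l'.card = l.card) (hrow : l'.rowLen 0 ≤ l.rowLen 0) : l' = l := by
  have hl := card_removeFirstRow_add_rowLen l
  have hl' := card_removeFirstRow_add_rowLen l'
  have hrest := eq_of_le_of_card_le h.removeFirstRow_le (by omega)
  rw [hrest] at hl'
  exact eq_of_removeFirstRow_eq hrest (by omega)

end RemoveFirstRow

section Skewing

/-- Integral symmetric functions, expanded in the basis of Schur functions. -/
abbrev SymFun : Type := YoungDiagram →₀ ℤ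

/-- The operator `h_m^⊥`, adjoint to multiplication by the complete symmetric function `h_m`,
given on Schur functions by Pieri's rule. -/
noncomputable def hSkew (m : ℕ) : Module.End ℤ SymFun :=
  Finsupp.linearCombination ℤ fun l =>
    ∑ ν ∈ horizontalStrips l with ν.card + m = l.card, Finsupp.single ν 1

/-- The symmetric function with `s_l` replaced by `s_{l'}`, where `l'` is the conjugate of `l`. -/
noncomputable def conjugate : SymFun ≃ₗ[ℤ] SymFun :=
  Finsupp.domLCongr YoungDiagram.transposeOrderIso.toEquiv

/-- The operator `(-1)^m e_m^⊥`, where `e_m^⊥` is adjoint to multiplication by the elementary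
symmetric function `e_m`. With the sign included, the generating functions of `eSkew` and `hSkew`
are inverse to each other, and stretching them needs no further signs. -/
noncomputable def eSkew (m : ℕ) : Module.End ℤ SymFun :=
  (-1) ^ m • conjugate.symm.conj (hSkew m)

/-- The generating function of the operators `h_m^⊥`. -/
noncomputable def hSeries : (Module.End ℤ SymFun)⟦X⟧ := PowerSeries.mk hSkew

/-- The generating function of the operators `(-1)^m e_m^⊥`. -/
noncomputable def eSeries : (Module.End ℤ SymFun)⟦X⟧ := PowerSeries.mk eSkew

open scoped Classical in
theorem hSkew_single_apply (m : ℕ) (l ν : YoungDiagram) :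
    hSkew m (Finsupp.single l 1) ν =
      if IsHorizontalStrip ν l ∧ ν.card + m = l.card then 1 else 0 := by
  simp [hSkew, Finsupp.linearCombination_single, Finsupp.finsetSum_apply, Finsupp.single_apply,
    mem_horizontalStrips]

open scoped Classical in
theorem hSkew_apply (m : ℕ) (u : SymFun) (ν : YoungDiagram) :
    hSkew m u ν = ∑ l ∈ u.support with IsHorizontalStrip ν l ∧ ν.card + m = l.card, u l := by
  rw [sum_filter]
  simp [hSkew, Finsupp.linearCombination_apply, Finsupp.sum, Finsupp.finsetSum_apply,
    Finsupp.single_apply, mem_horizontalStrips]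

theorem conjugate_apply (u : SymFun) (l : YoungDiagram) : conjugate u l = u l.transpose := rfl

theorem conjugate_single (l : YoungDiagram) (c : ℤ) :
    conjugate (Finsupp.single l c) = Finsupp.single l.transpose c :=
  Finsupp.domLCongr_single _ _ _

theorem eSkew_apply (m : ℕ) (u : SymFun) :
    eSkew m u = (-1 : ℤ) ^ m • conjugate (hSkew m (conjugate u)) := by
  rw [eSkew]
  rfl

theorem card_transpose (l : YoungDiagram) : l.transpose.card = l.card :=
  card_map _

open scoped Classical in
theorem eSkew_single_apply (m : ℕ) (l ν : YoungDiagram) :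
    eSkew m (Finsupp.single l 1) ν =
      if IsVerticalStrip ν l ∧ ν.card + m = l.card then (-1) ^ m else 0 := by
  rw [eSkew_apply, conjugate_single, Finsupp.smul_apply, conjugate_apply, hSkew_single_apply,
    card_transpose, card_transpose, smul_eq_mul, mul_ite, mul_one, mul_zero]
  rfl

theorem hSkew_zero : hSkew 0 = 1 := by
  classical
  refine Finsupp.lhom_ext' fun l => LinearMap.ext_ring ?_
  ext ν
  have hiff : IsHorizontalStrip ν l ∧ ν.card + 0 = l.card ↔ l = ν :=
    ⟨fun h => (eq_of_le_of_card_le h.1.1 h.2.ge).symm, by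
      rintro rfl; exact ⟨isHorizontalStrip_refl l, rfl⟩⟩
  exact (hSkew_single_apply 0 l ν).trans ((if_congr hiff rfl rfl).trans
    Finsupp.single_apply.symm)

theorem sum_antidiagonal_neg_one_pow {a b c : ℕ} (hab : a ≤ b) (hbc : b ≤ c) (m : ℕ) :
    ∑ p ∈ antidiagonal m, (if a + p.1 = b ∧ b + p.2 = c then (-1 : ℤ) ^ p.1 else 0) =
      if a + m = c then (-1) ^ a * (-1) ^ b else 0 := by
  obtain ⟨i, rfl⟩ := Nat.exists_eq_add_of_le hab
  obtain ⟨j, rfl⟩ := Nat.exists_eq_add_of_le hbc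
  have hiff (p : ℕ × ℕ) : a + p.1 = a + i ∧ a + i + p.2 = a + i + j ↔ p = (i, j) := by
    simp [Prod.ext_iff]
  have hsign : (-1 : ℤ) ^ a * (-1) ^ (a + i) = (-1) ^ i := by
    rw [pow_add, ← mul_assoc, ← mul_pow, neg_one_mul, neg_neg, one_pow, one_mul]
  simp only [hiff, sum_ite_eq', HasAntidiagonal.mem_antidiagonal, hsign]
  exact if_congr (by omega) rfl rfl

open scoped Classical in
theorem sum_antidiagonal_eSkew_single_apply {ρ l : YoungDiagram} (hρl : IsHorizontalStrip ρ l)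
    (m : ℕ) (ν : YoungDiagram) :
    ∑ p ∈ antidiagonal m,
        (if ρ.card + p.2 = l.card then eSkew p.1 (Finsupp.single ρ 1) ν else 0) =
      if IsVerticalStrip ν ρ then
        if ν.card + m = l.card then (-1) ^ ν.card * (-1) ^ ρ.card else 0
      else 0 := by
  by_cases hνρ : IsVerticalStrip ν ρ
  · have hcard : ν.card ≤ ρ.card :=
      card_le_card (YoungDiagram.cells_subset_iff.2 (isVerticalStrip_iff.1 hνρ).1)
    rw [if_pos hνρ, ← sum_antidiagonal_neg_one_pow hcard
      (card_le_card (YoungDiagram.cells_subset_iff.2 hρl.1)) m]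
    refine sum_congr rfl fun p _ => ?_
    simp only [eSkew_single_apply, hνρ, true_and, ← ite_and, and_comm]
  · simp [eSkew_single_apply, hνρ]

theorem eSeries_mul_hSeries : eSeries * hSeries = 1 := by
  classical
  ext m : 1
  refine Finsupp.lhom_ext' fun l => LinearMap.ext_ring ?_
  ext ν
  calc PowerSeries.coeff m (eSeries * hSeries) (Finsupp.single l 1) ν
      = ∑ p ∈ antidiagonal m, eSkew p.1 (hSkew p.2 (Finsupp.single l 1)) ν := by
        simp [PowerSeries.coeff_mul, eSeries, hSeries, Finsupp.finsetSum_apply]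
    _ = ∑ p ∈ antidiagonal m, ∑ ρ ∈ horizontalStrips l,
          if ρ.card + p.2 = l.card then eSkew p.1 (Finsupp.single ρ 1) ν else 0 := by
        simp [hSkew, Finsupp.finsetSum_apply, ← sum_filter]
    _ = if ν.card + m = l.card then
          (-1) ^ ν.card * ∑ ρ ∈ horizontalStrips l with IsVerticalStrip ν ρ, (-1) ^ ρ.card
        else 0 := by
        rw [sum_comm, sum_congr rfl fun ρ hρ =>
          sum_antidiagonal_eSkew_single_apply (mem_horizontalStrips.1 hρ) m ν, ← sum_filter]
        split_ifs
        · rw [mul_sum]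
        · rw [sum_const_zero]
    _ = PowerSeries.coeff m (1 : (Module.End ℤ SymFun)⟦X⟧) (Finsupp.single l 1) ν := by
        rw [sum_isVerticalStrip_neg_one_pow_card, PowerSeries.coeff_one]
        by_cases hlν : l = ν
        · subst hlν
          by_cases hm : m = 0 <;> simp [hm, ← mul_pow]
        · by_cases hm : m = 0 <;> simp [hm, hlν]

theorem stretch_eSeries_mul_stretch_hSeries {n : ℕ} (hn : 0 < n) :
    stretch n eSeries * stretch n hSeries = 1 := by
  rw [← stretch_mul hn, eSeries_mul_hSeries, stretch_one hn]

theorem coeff_zero_hSeries : PowerSeries.coeff 0 hSeries = 1 :=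
  (PowerSeries.coeff_mk _ _).trans hSkew_zero

/-- The span of the Schur functions whose diagram contains the cell `(a, b)`. -/
def containing (a b : ℕ) : Submodule ℤ SymFun :=
  Finsupp.supported ℤ ℤ {l | (a, b) ∈ l}

theorem mem_containing {a b : ℕ} {u : SymFun} :
    u ∈ containing a b ↔ ∀ l, (a, b) ∉ l → u l = 0 :=
  Finsupp.mem_supported' _ _

theorem mem_containing_succ_left {a b : ℕ} {u : SymFun} :
    u ∈ containing (a + 1) b ↔ ∀ m, hSkew m u ∈ containing a b := by
  classical
  simp only [mem_containing, hSkew_apply]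
  constructor
  · intro hu m ν hν
    refine sum_eq_zero fun l hl => hu l fun hmem => hν ?_
    exact (mem_filter.1 hl).2.1.2 a b hmem
  · intro hu
    by_contra! hne
    obtain ⟨l', hl', hne'⟩ := hne
    obtain ⟨l, hl, hmax⟩ := exists_max_image {l ∈ u.support | (a + 1, b) ∉ l}
      (fun l => l.rowLen 0) ⟨l', mem_filter.2 ⟨Finsupp.mem_support_iff.2 hne', hl'⟩⟩
    simp only [mem_filter, and_imp] at hl hmax
    have hrest : (a, b) ∉ removeFirstRow l := mem_removeFirstRow.not.2 hl.2
    have hzero := hu (l.rowLen 0) (removeFirstRow l) hrest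
    rw [sum_eq_single_of_mem l] at hzero
    · exact Finsupp.mem_support_iff.1 hl.1 hzero
    · exact mem_filter.2 ⟨hl.1, isHorizontalStrip_removeFirstRow l,
        card_removeFirstRow_add_rowLen l⟩
    · intro k hk hkl
      obtain ⟨hksupp, hstrip, hcard⟩ := mem_filter.1 hk
      have hcell : (a + 1, b) ∉ k := fun h => hrest (hstrip.2 a b h)
      exact (hkl (eq_of_isHorizontalStrip_removeFirstRow hstrip
        (hcard.symm.trans (card_removeFirstRow_add_rowLen l)) (hmax k hksupp hcell))).elim

theorem conjugate_mem_containing {a b : ℕ} {u : SymFun} :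
    conjugate u ∈ containing a b ↔ u ∈ containing b a := by
  simp only [mem_containing, conjugate_apply]
  exact YoungDiagram.transposeOrderIso.toEquiv.forall_congr fun l => by
    simp [YoungDiagram.mem_transpose]

theorem mem_containing_succ_right {a b : ℕ} {u : SymFun} :
    u ∈ containing a (b + 1) ↔ ∀ m, eSkew m u ∈ containing a b := by
  rw [← conjugate_mem_containing, mem_containing_succ_left]
  refine forall_congr' fun m => ?_
  rw [eSkew_apply, ← conjugate_mem_containing]
  obtain h | h := neg_one_pow_eq_or ℤ m <;> simp [h]

end Skewing

section Branching

variable {N : ℕ}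

/-- The filling of `μ` that agrees with `T` on the subdiagram `ρ` and has the largest entry
elsewhere. -/
def extendByLast (ρ μ : YoungDiagram) (T : ρ.cells → Fin N) (c : μ.cells) : Fin (N + 1) :=
  if h : (c : ℕ × ℕ) ∈ ρ.cells then (T ⟨c, h⟩).castSucc else Fin.last N

variable {ρ μ : YoungDiagram}

theorem extendByLast_of_mem (T : ρ.cells → Fin N) {c : μ.cells} (h : (c : ℕ × ℕ) ∈ ρ.cells) :
    extendByLast ρ μ T c = (T ⟨c, h⟩).castSucc :=
  dif_pos h

theorem extendByLast_of_notMem (T : ρ.cells → Fin N) {c : μ.cells} (h : (c : ℕ × ℕ) ∉ ρ.cells) :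
    extendByLast ρ μ T c = Fin.last N :=
  dif_neg h

theorem extendByLast_ne_last_iff (T : ρ.cells → Fin N) (c : μ.cells) :
    extendByLast ρ μ T c ≠ Fin.last N ↔ (c : ℕ × ℕ) ∈ ρ.cells := by
  by_cases h : (c : ℕ × ℕ) ∈ ρ.cells
  · simp [extendByLast_of_mem T h, h, (Fin.castSucc_lt_last _).ne]
  · simp [extendByLast_of_notMem T h, h]

theorem isSemistandardOn_extendByLast_iff (hρμ : IsHorizontalStrip ρ μ) (T : ρ.cells → Fin N) :
    IsSemistandardOn μ.cells (extendByLast ρ μ T) ↔ IsSemistandardOn ρ.cells T := by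
  constructor
  · rintro ⟨hrow, hcol⟩
    refine ⟨fun i j h₁ h₂ => ?_, fun i j h₁ h₂ => ?_⟩
    · have := hrow i j (hρμ.1 h₁) (hρμ.1 h₂)
      rwa [extendByLast_of_mem T h₁, extendByLast_of_mem T h₂,
        Fin.castSucc_le_castSucc_iff] at this
    · have := hcol i j (hρμ.1 h₁) (hρμ.1 h₂)
      rwa [extendByLast_of_mem T h₁, extendByLast_of_mem T h₂,
        Fin.castSucc_lt_castSucc_iff] at this
  · rintro ⟨hrow, hcol⟩
    refine ⟨fun i j h₁ h₂ => ?_, fun i j h₁ h₂ => ?_⟩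
    · by_cases h₂' : (i, j + 1) ∈ ρ.cells
      · have h₁' : (i, j) ∈ ρ.cells := ρ.up_left_mem le_rfl (Nat.le_succ j) h₂'
        rw [extendByLast_of_mem T h₁', extendByLast_of_mem T h₂', Fin.castSucc_le_castSucc_iff]
        exact hrow i j h₁' h₂'
      · exact (Fin.le_last _).trans_eq (extendByLast_of_notMem T h₂').symm
    · have h₁' : (i, j) ∈ ρ.cells := hρμ.2 i j h₂
      rw [extendByLast_of_mem T h₁']
      by_cases h₂' : (i + 1, j) ∈ ρ.cells
      · rw [extendByLast_of_mem T h₂', Fin.castSucc_lt_castSucc_iff]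
        exact hcol i j h₁' h₂'
      · exact (Fin.castSucc_lt_last _).trans_eq (extendByLast_of_notMem T h₂').symm

theorem exists_extendByLast_eq {T : μ.cells → Fin (N + 1)} (hT : IsSemistandardOn μ.cells T) :
    ∃ (ρ : YoungDiagram) (T' : ρ.cells → Fin N),
      IsHorizontalStrip ρ μ ∧ extendByLast ρ μ T' = T := by
  let s : Finset (ℕ × ℕ) := ({c | T c ≠ Fin.last N} : Finset μ.cells).map (.subtype _)
  have mem_s (c : ℕ × ℕ) : c ∈ s ↔ ∃ h : c ∈ μ.cells, T ⟨c, h⟩ ≠ Fin.last N := by simp [s]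
  have hcol : ∀ i j, (i + 1, j) ∈ μ → (i, j) ∈ s := fun i j h =>
    have h' : (i, j) ∈ μ := μ.up_left_mem (Nat.le_succ i) le_rfl h
    (mem_s _).2 ⟨h', ((hT.2 i j h' h).trans_le (Fin.le_last _)).ne⟩
  have hrow : ∀ i j, (i, j + 1) ∈ s → (i, j) ∈ s := fun i j h => by
    obtain ⟨h, hne⟩ := (mem_s _).1 h
    have h' : (i, j) ∈ μ := μ.up_left_mem le_rfl (Nat.le_succ j) h
    exact (mem_s _).2 ⟨h', ((hT.1 i j h' h).trans_lt (Fin.lt_last_iff_ne_last.2 hne)).ne⟩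
  let ρ : YoungDiagram :=
    ⟨s, isLowerSet_of_adjacent (fun i j h => hcol i j ((mem_s _).1 h).1) hrow⟩
  refine ⟨ρ, fun c => (T ⟨c, ((mem_s c).1 c.2).1⟩).castPred ((mem_s c).1 c.2).2,
    ⟨fun c hc => ((mem_s c).1 hc).1, hcol⟩, funext fun c => ?_⟩
  by_cases hc : (c : ℕ × ℕ) ∈ ρ.cells
  · rw [extendByLast_of_mem _ hc, Fin.castSucc_castPred]
  · rw [extendByLast_of_notMem _ hc]
    by_contra hne
    exact hc ((mem_s c).2 ⟨c.2, Ne.symm hne⟩)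

theorem sigma_eq_of_extendByLast_eq {ρ' : YoungDiagram} (hρ : ρ ≤ μ) (hρ' : ρ' ≤ μ)
    {T : ρ.cells → Fin N} {T' : ρ'.cells → Fin N}
    (h : extendByLast ρ μ T = extendByLast ρ' μ T') :
    (⟨ρ, T⟩ : Σ ρ : YoungDiagram, (ρ.cells → Fin N)) = ⟨ρ', T'⟩ := by
  have hmem : ∀ c ∈ μ, c ∈ ρ.cells ↔ c ∈ ρ'.cells := fun c hc => by
    rw [← extendByLast_ne_last_iff T ⟨c, hc⟩, h, extendByLast_ne_last_iff]
  obtain rfl : ρ = ρ' := YoungDiagram.ext (Finset.ext fun c =>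
    ⟨fun hc => (hmem c (hρ hc)).1 hc, fun hc => (hmem c (hρ' hc)).2 hc⟩)
  refine congrArg (Sigma.mk ρ) (funext fun c => Fin.castSucc_injective N ?_)
  have hc := congrFun h ⟨c, hρ c.2⟩
  exact (extendByLast_of_mem T c.2).symm.trans (hc.trans (extendByLast_of_mem T' c.2))

theorem prod_extendByLast {A : Type*} [CommMonoid A] (hρμ : ρ ≤ μ) (T : ρ.cells → Fin N)
    (f : Fin (N + 1) → A) :
    ∏ c, f (extendByLast ρ μ T c) =
      (∏ c, f (T c).castSucc) * f (Fin.last N) ^ (μ.card - ρ.card) := by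
  have hsub : ρ.cells ⊆ μ.cells := YoungDiagram.cells_subset_iff.2 hρμ
  let g (c : ℕ × ℕ) : A :=
    f (if h : c ∈ ρ.cells then (T ⟨c, h⟩).castSucc else Fin.last N)
  calc ∏ c : μ.cells, g c
      = (∏ c ∈ ρ.cells, g c) * ∏ c ∈ μ.cells \ ρ.cells, g c := by
        rw [prod_coe_sort μ.cells g, mul_comm, prod_sdiff hsub]
    _ = (∏ c : ρ.cells, f (T c).castSucc) * ∏ _c ∈ μ.cells \ ρ.cells, f (Fin.last N) := by
        rw [← prod_coe_sort ρ.cells g]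
        refine congrArg₂ _ (prod_congr rfl fun c _ => ?_) (prod_congr rfl fun c hc => ?_)
        · simp only [g, dif_pos c.2]
        · simp only [g, dif_neg (mem_sdiff.1 hc).2]
    _ = (∏ c, f (T c).castSucc) * f (Fin.last N) ^ (μ.card - ρ.card) := by
        rw [prod_const, card_sdiff_of_subset hsub]

/-- Polynomials in `N + 1` variables as polynomials in the last one over those in the first `N`. -/
noncomputable def splitLast (N : ℕ) :
    MvPolynomial (Fin (N + 1)) ℤ ≃ₐ[ℤ] Polynomial (MvPolynomial (Fin N) ℤ) :=
  (renameEquiv ℤ finSuccEquivLast).trans (optionEquivLeft ℤ (Fin N))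

theorem splitLast_X_castSucc (i : Fin N) : splitLast N (X i.castSucc) = Polynomial.C (X i) := by
  simp [splitLast]

theorem splitLast_X_last : splitLast N (X (Fin.last N)) = Polynomial.X := by
  simp [splitLast]

theorem splitLast_schurPoly (μ : YoungDiagram) :
    splitLast N (schurPoly (N + 1) μ) = ∑ ρ ∈ horizontalStrips μ,
      Polynomial.C (schurPoly N ρ) * Polynomial.X ^ (μ.card - ρ.card) := by
  classical
  simp only [schurPoly, cellSchur, map_sum, map_prod, sum_mul]
  rw [sum_sigma']
  symm
  refine sum_nbij (fun p => extendByLast p.1 μ p.2) ?_ ?_ ?_ ?_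
  · rintro ⟨ρ, T⟩ h
    simp only [mem_sigma, mem_filter_univ, mem_horizontalStrips] at h ⊢
    exact (isSemistandardOn_extendByLast_iff h.1 T).2 h.2
  · rintro ⟨ρ, T⟩ h ⟨ρ', T'⟩ h' heq
    simp only [coe_sigma, Set.mem_sigma_iff, mem_coe, mem_horizontalStrips] at h h'
    exact sigma_eq_of_extendByLast_eq h.1.1 h'.1.1 heq
  · intro T hT
    rw [mem_coe, mem_filter_univ] at hT
    obtain ⟨ρ, T', hρμ, rfl⟩ := exists_extendByLast_eq hT
    refine ⟨⟨ρ, T'⟩, ?_, rfl⟩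
    rw [mem_coe, mem_sigma, mem_filter_univ, mem_horizontalStrips]
    exact ⟨hρμ, (isSemistandardOn_extendByLast_iff hρμ T').1 hT⟩
  · rintro ⟨ρ, T⟩ h
    rw [mem_sigma, mem_horizontalStrips] at h
    simp only [prod_extendByLast h.1.1 T fun i => splitLast N (X i), splitLast_X_castSucc,
      splitLast_X_last]

end Branching

section Polynomials

variable {N : ℕ}

/-- The polynomial in `N` variables represented by a symmetric function. -/
noncomputable def schurSum (N : ℕ) : SymFun →ₗ[ℤ] MvPolynomial (Fin N) ℤ :=
  Finsupp.linearCombination ℤ (schurPoly N)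

theorem schurSum_single (N : ℕ) (l : YoungDiagram) :
    schurSum N (Finsupp.single l 1) = schurPoly N l := by
  rw [schurSum, Finsupp.linearCombination_single, one_smul]

theorem coeff_splitLast_schurSum (u : SymFun) (m : ℕ) :
    (splitLast N (schurSum (N + 1) u)).coeff m = schurSum N (hSkew m u) := by
  have hsingle (l : YoungDiagram) : (splitLast N (schurPoly (N + 1) l)).coeff m =
      schurSum N (hSkew m (Finsupp.single l 1)) := by
    rw [splitLast_schurPoly, hSkew, Finsupp.linearCombination_single, one_smul, map_sum,
      Polynomial.finsetSum_coeff, sum_filter]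
    refine sum_congr rfl fun ν hν => ?_
    have hle : ν.card ≤ l.card :=
      card_le_card (YoungDiagram.cells_subset_iff.2 (mem_horizontalStrips.1 hν).1)
    rw [Polynomial.coeff_C_mul_X_pow, schurSum_single]
    exact if_congr (by omega) rfl rfl
  have hlin : (Polynomial.lcoeff (MvPolynomial (Fin N) ℤ) m).restrictScalars ℤ ∘ₗ
      (splitLast N).toLinearMap ∘ₗ schurSum (N + 1) = schurSum N ∘ₗ hSkew m :=
    Finsupp.lhom_ext' fun l => LinearMap.ext_ring (by simpa [schurSum_single] using hsingle l)
  exact LinearMap.congr_fun hlin u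

theorem eq_bot_of_notMem {l : YoungDiagram} (h : (0, 0) ∉ l) : l = ⊥ :=
  eq_bot_iff.2 fun _ hc => (h (l.up_left_mem (Nat.zero_le _) (Nat.zero_le _) hc)).elim

theorem schurPoly_zero_bot : schurPoly 0 ⊥ = 1 := by
  classical
  have : IsEmpty (⊥ : YoungDiagram).cells := isEmpty_coe_sort.2 YoungDiagram.cells_bot
  rw [schurPoly, cellSchur, filter_true_of_mem]
  · simp
  · exact fun T _ => ⟨fun i j h => (YoungDiagram.notMem_bot _ h).elim,
      fun i j h => (YoungDiagram.notMem_bot _ h).elim⟩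

theorem schurPoly_zero_of_ne_bot {l : YoungDiagram} (h : l ≠ ⊥) : schurPoly 0 l = 0 := by
  have hcell : (0, 0) ∈ l.cells := by
    by_contra hnot
    exact h (eq_bot_of_notMem hnot)
  have : IsEmpty (l.cells → Fin 0) := ⟨fun T => (T ⟨_, hcell⟩).elim0⟩
  rw [schurPoly, cellSchur, univ_eq_empty, filter_empty, sum_empty]

theorem schurSum_zero (u : SymFun) : schurSum 0 u = C (u ⊥) := by
  rw [schurSum, Finsupp.linearCombination_apply, Finsupp.sum_eq_single ⊥]
  · simp [schurPoly_zero_bot, smul_eq_C_mul]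
  · intro l _ hl
    simp [schurPoly_zero_of_ne_bot hl]
  · simp

theorem mem_containing_zero_zero {u : SymFun} : u ∈ containing 0 0 ↔ u ⊥ = 0 := by
  rw [mem_containing]
  refine ⟨fun h => h ⊥ (YoungDiagram.notMem_bot _), fun h l hl => ?_⟩
  rw [eq_bot_of_notMem hl, h]

theorem mem_containing_of_schurSum_eq_zero {u : SymFun} (h : schurSum N u = 0) :
    u ∈ containing N 0 := by
  induction N generalizing u with
  | zero =>
    rw [mem_containing_zero_zero]
    rwa [schurSum_zero, C_eq_zero] at h
  | succ N ih =>
    rw [mem_containing_succ_left]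
    intro m
    apply ih
    rw [← coeff_splitLast_schurSum, h, map_zero, Polynomial.coeff_zero]

theorem coeff_splitLast_expand {n : ℕ} (hn : 0 < n) (p : MvPolynomial (Fin (N + 1)) ℤ) (m : ℕ) :
    (splitLast N (expand n p)).coeff m =
      if n ∣ m then expand n ((splitLast N p).coeff (m / n)) else 0 := by
  have hcomm : (splitLast N).toAlgHom.comp (expand n) =
      ((Polynomial.expand (MvPolynomial (Fin N) ℤ) n).restrictScalars ℤ).comp
        ((Polynomial.mapAlgHom (expand n)).comp (splitLast N).toAlgHom) := by
    refine algHom_ext fun i => ?_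
    induction i using Fin.lastCases with
    | last => simp [splitLast_X_last]
    | cast i => simp [splitLast_X_castSucc]
  have hp := congrArg (Polynomial.coeff · m) (DFunLike.congr_fun hcomm p)
  simpa [Polynomial.coeff_expand hn, apply_ite] using hp

theorem isHomogeneous_schurPoly (N : ℕ) (l : YoungDiagram) :
    (schurPoly N l).IsHomogeneous l.card := by
  refine IsHomogeneous.sum _ _ _ fun T _ => ?_
  simpa using IsHomogeneous.prod univ (fun c => X (T c)) (fun _ => 1)
    fun c _ => isHomogeneous_X ℤ (T c)

theorem isHomogeneous_expand {σ R : Type*} [CommSemiring R] {p : MvPolynomial σ R}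
    {d : ℕ} (hp : p.IsHomogeneous d) (n : ℕ) : (expand n p).IsHomogeneous (n * d) :=
  hp.aeval _ fun i => by simpa using (isHomogeneous_X R i).pow n

theorem homogeneousComponent_schurSum (e : ℕ) (u : SymFun) :
    homogeneousComponent e (schurSum N u) = schurSum N (u.filter fun l => l.card = e) := by
  rw [schurSum, Finsupp.linearCombination_apply, Finsupp.linearCombination_apply, Finsupp.sum,
    Finsupp.sum, map_sum, Finsupp.support_filter, sum_filter]
  refine sum_congr rfl fun l _ => ?_
  rw [map_zsmul, homogeneousComponent_of_mem (isHomogeneous_schurPoly N l)]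
  by_cases hl : l.card = e
  · rw [if_pos hl, if_pos hl.symm,
      Finsupp.filter_apply_pos (fun l : YoungDiagram => l.card = e) _ hl]
  · rw [if_neg hl, if_neg (Ne.symm hl), smul_zero]

theorem card_eq_of_isHomogeneous_schurSum {d : ℕ} {u : SymFun}
    (hrows : ∀ l ∈ u.support, (N, 0) ∉ l) (h : (schurSum N u).IsHomogeneous d) :
    ∀ l ∈ u.support, l.card = d := by
  have hzero : schurSum N (u - u.filter fun l => l.card = d) = 0 := by
    rw [map_sub, ← homogeneousComponent_schurSum, homogeneousComponent_of_mem h, if_pos rfl,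
      sub_self]
  intro l hl
  by_contra hcard
  have hcoeff := mem_containing.1 (mem_containing_of_schurSum_eq_zero hzero) l (hrows l hl)
  rw [Finsupp.sub_apply, Finsupp.filter_apply_neg (fun l : YoungDiagram => l.card = d) _ hcard,
    sub_zero] at hcoeff
  exact Finsupp.mem_support_iff.1 hl hcoeff

end Polynomials

section Plethysm

variable {n : ℕ}

/-- The graph of the plethysm `w ↦ p_n ∘ w`: the pairs `(u, w)` of symmetric functions with
`u(x₁, x₂, …) = w(x₁ⁿ, x₂ⁿ, …)` in every finite number of variables. -/
noncomputable def plethysmGraph (n : ℕ) : Submodule ℤ (SymFun × SymFun) :=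
  ⨅ N, LinearMap.eqLocus (schurSum N ∘ₗ LinearMap.fst ℤ SymFun SymFun)
    ((expand n).toLinearMap ∘ₗ schurSum N ∘ₗ LinearMap.snd ℤ SymFun SymFun)

theorem mem_plethysmGraph {u w : SymFun} :
    (u, w) ∈ plethysmGraph n ↔ ∀ N, schurSum N u = expand n (schurSum N w) := by
  simp [plethysmGraph]

theorem coeff_splitLast_expand_schurSum (hn : 0 < n) (N m : ℕ) (w : SymFun) :
    (splitLast N (expand n (schurSum (N + 1) w))).coeff m =
      expand n (schurSum N (PowerSeries.coeff m (stretch n hSeries) w)) := by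
  rw [coeff_splitLast_expand hn, coeff_stretch, coeff_splitLast_schurSum, hSeries,
    PowerSeries.coeff_mk]
  split_ifs <;> simp

theorem schurSum_hSkew_eq_expand (hn : 0 < n) {N : ℕ} {u w : SymFun}
    (h : schurSum (N + 1) u = expand n (schurSum (N + 1) w)) (m : ℕ) :
    schurSum N (hSkew m u) = expand n (schurSum N (PowerSeries.coeff m (stretch n hSeries) w)) := by
  rw [← coeff_splitLast_schurSum, h, coeff_splitLast_expand_schurSum hn]

theorem coeff_hSeries_mem_plethysmGraph (hn : 0 < n) (m : ℕ) {u w : SymFun}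
    (h : (u, w) ∈ plethysmGraph n) :
    (PowerSeries.coeff m hSeries u, PowerSeries.coeff m (stretch n hSeries) w) ∈
      plethysmGraph n := by
  rw [mem_plethysmGraph] at h ⊢
  rw [hSeries, PowerSeries.coeff_mk, ← hSeries]
  exact fun N => schurSum_hSkew_eq_expand hn (h (N + 1)) m

theorem coeff_eSeries_mem_plethysmGraph (hn : 0 < n) (m : ℕ) {u w : SymFun}
    (h : (u, w) ∈ plethysmGraph n) :
    (PowerSeries.coeff m eSeries u, PowerSeries.coeff m (stretch n eSeries) w) ∈
      plethysmGraph n :=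
  leftInverse_coeff_mem eSeries_mul_hSeries (stretch_eSeries_mul_stretch_hSeries hn)
    coeff_zero_hSeries ((coeff_zero_stretch n hSeries).trans coeff_zero_hSeries) _
    (fun m _ _ => coeff_hSeries_mem_plethysmGraph hn m) m h

theorem mem_containing_of_mem_plethysmGraph (hn : 0 < n) {a b : ℕ} {u w : SymFun}
    (h : (u, w) ∈ plethysmGraph n) (hw : w ∈ containing a b) : u ∈ containing a b := by
  induction b generalizing u w with
  | zero =>
    induction a generalizing u w with
    | zero =>
      rw [mem_containing_zero_zero] at hw ⊢
      have h₀ := mem_plethysmGraph.1 h 0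
      rwa [schurSum_zero, schurSum_zero, expand_C, hw, C_inj] at h₀
    | succ a ih =>
      have hw' : ∀ m, PowerSeries.coeff m hSeries w ∈ containing a 0 := fun m => by
        simpa [hSeries] using mem_containing_succ_left.1 hw m
      refine mem_containing_succ_left.2 fun m => ?_
      simpa [hSeries] using ih (coeff_hSeries_mem_plethysmGraph hn m h)
        (coeff_stretch_apply_mem hw' n m)
  | succ b ih =>
    have hw' : ∀ m, PowerSeries.coeff m eSeries w ∈ containing a b := fun m => by
      simpa [eSeries] using mem_containing_succ_right.1 hw m
    refine mem_containing_succ_right.2 fun m => ?_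
    simpa [eSeries] using ih (coeff_eSeries_mem_plethysmGraph hn m h)
      (coeff_stretch_apply_mem hw' n m)

theorem exists_card_add_eq_of_mem_support_hSkew {m : ℕ} {u : SymFun} {ν : YoungDiagram}
    (hν : ν ∈ (hSkew m u).support) : ∃ l ∈ u.support, ν.card + m = l.card := by
  classical
  rw [Finsupp.mem_support_iff, hSkew_apply] at hν
  obtain ⟨l, hl, -⟩ := exists_ne_zero_of_sum_ne_zero hν
  exact ⟨l, (mem_filter.1 hl).1, (mem_filter.1 hl).2.2⟩

theorem exists_card_add_eq_of_mem_support_coeff_stretch_hSeries {m : ℕ} {u : SymFun}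
    {ν : YoungDiagram} (hν : ν ∈ (PowerSeries.coeff m (stretch n hSeries) u).support) :
    ∃ l ∈ u.support, n * ν.card + m = n * l.card := by
  rw [coeff_stretch, hSeries, PowerSeries.coeff_mk] at hν
  split_ifs at hν with hm
  · obtain ⟨l, hl, hcard⟩ := exists_card_add_eq_of_mem_support_hSkew hν
    exact ⟨l, hl, by rw [← hcard, mul_add, Nat.mul_div_cancel' hm]⟩
  · simp at hν

theorem schurSum_succ_eq_expand (hn : 0 < n) {N : ℕ} {u w : SymFun}
    (hu : ∀ l ∈ u.support, l.card ≤ N) (hw : ∀ l ∈ w.support, n * l.card ≤ N)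
    (h : schurSum N u = expand n (schurSum N w)) :
    schurSum (N + 1) u = expand n (schurSum (N + 1) w) := by
  induction N using Nat.strong_induction_on generalizing u w with
  | _ N ih =>
    refine (splitLast N).injective (Polynomial.ext fun m => ?_)
    rw [coeff_splitLast_schurSum, coeff_splitLast_expand_schurSum hn]
    obtain rfl | hm := m.eq_zero_or_pos
    · rwa [hSkew_zero, coeff_zero_stretch, coeff_zero_hSeries]
    have hu' : ∀ l ∈ (hSkew m u).support, l.card + m ≤ N := fun l hl => by
      obtain ⟨k, hk, hcard⟩ := exists_card_add_eq_of_mem_support_hSkew hl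
      exact hcard.trans_le (hu k hk)
    have hw' : ∀ l ∈ (PowerSeries.coeff m (stretch n hSeries) w).support,
        n * l.card + m ≤ N := fun l hl => by
      obtain ⟨k, hk, hcard⟩ := exists_card_add_eq_of_mem_support_coeff_stretch_hSeries hl
      exact hcard.trans_le (hw k hk)
    cases N with
    | zero =>
      have hu₀ : hSkew m u = 0 := Finsupp.support_eq_empty.1
        (eq_empty_of_forall_notMem fun l hl => by have := hu' l hl; omega)
      have hw₀ : PowerSeries.coeff m (stretch n hSeries) w = 0 := Finsupp.support_eq_empty.1
        (eq_empty_of_forall_notMem fun l hl => by have := hw' l hl; omega)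
      simp only [hu₀, hw₀, map_zero]
    | succ N =>
      exact ih N (Nat.lt_succ_self N) (fun l hl => by have := hu' l hl; omega)
        (fun l hl => by have := hw' l hl; omega) (schurSum_hSkew_eq_expand hn h m)

theorem mem_plethysmGraph_of_schurSum_eq_expand (hn : 0 < n) {N : ℕ} {u w : SymFun}
    (hu : ∀ l ∈ u.support, l.card ≤ N) (hw : ∀ l ∈ w.support, n * l.card ≤ N)
    (h : schurSum N u = expand n (schurSum N w)) : (u, w) ∈ plethysmGraph n := by
  refine mem_plethysmGraph.2 fun N' => ?_
  obtain hle | hle := le_total N N'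
  · induction N', hle using Nat.le_induction with
    | base => exact h
    | succ k hk ih =>
      exact schurSum_succ_eq_expand hn (fun l hl => (hu l hl).trans hk)
        (fun l hl => (hw l hl).trans hk) ih
  · induction hle using Nat.decreasingInduction with
    | self => exact h
    | of_succ k _ ih =>
      simpa [hSkew_zero, coeff_zero_stretch, coeff_zero_hSeries] using
        schurSum_hSkew_eq_expand hn ih 0

end Plethysm

end SXP

open SXP

/-- **Lower bound for the SXP coefficients.**
Let `n ≥ 1` and let `λ, μ` be partitions (Young diagrams).  The SXP coefficient
`⟨s_μ, p_n ∘ s_λ⟩` is the (integer) coefficient of `s_μ` in the Schur expansion of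
`p_n ∘ s_λ = s_λ(x_1^n, …, x_N^n)` in `N ≥ n·|λ|` variables; here this expansion is
encoded by a finitely supported coefficient family `co` (supported on diagrams with
at most `N` rows, which makes it unique).  If `⟨s_μ, p_n ∘ s_λ⟩ ≠ 0` then
`[λ] ⊆ [μ]`, i.e. `λ_i ≤ μ_i` for all `i`. -/
theorem SXP_lower_bound {n : ℕ} (hn : 0 < n) (lam mu : YoungDiagram)
    (N : ℕ) (hN : n * lam.cells.card ≤ N)
    (co : YoungDiagram →₀ ℤ)
    (hrows : ∀ l ∈ co.support, l.colLen 0 ≤ N)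
    (hexp : aeval (fun i : Fin N => (X i : MvPolynomial (Fin N) ℤ) ^ n) (schurPoly N lam)
        = ∑ l ∈ co.support, co l • schurPoly N l)
    (hne : co mu ≠ 0) :
    ∀ i, lam.rowLen i ≤ mu.rowLen i := by
  have hsum : schurSum N co = expand n (schurSum N (Finsupp.single lam 1)) := by
    rw [schurSum_single]
    exact hexp.symm
  have hmem_support {l : YoungDiagram} (hl : l ∈ co.support) : (N, 0) ∉ l := by
    simpa [YoungDiagram.mem_iff_lt_colLen] using hrows l hl
  have hhom : (schurSum N co).IsHomogeneous (n * lam.card) := by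
    rw [hsum, schurSum_single]
    exact isHomogeneous_expand (isHomogeneous_schurPoly N lam) n
  have hpleth : (co, Finsupp.single lam 1) ∈ plethysmGraph n := by
    refine mem_plethysmGraph_of_schurSum_eq_expand hn (fun l hl => ?_) (fun l hl => ?_) hsum
    · exact (card_eq_of_isHomogeneous_schurSum (fun _ => hmem_support) hhom l hl).trans_le hN
    · rwa [mem_singleton.1 (Finsupp.support_single_subset hl)]
  intro i
  by_contra! hlt
  have hlam : Finsupp.single lam (1 : ℤ) ∈ containing i (mu.rowLen i) :=
    Finsupp.single_mem_supported _ _ (YoungDiagram.mem_iff_lt_rowLen.2 hlt)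
  refine hne (mem_containing.1 (mem_containing_of_mem_plethysmGraph hn hpleth hlam) mu ?_)
  simp [YoungDiagram.mem_iff_lt_rowLen]
end
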